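/- Suppose G and H are finite binary structures such that: (1) ∃ has a winning strategy in the colouring game G^{c+3}_ω(G,H); (2) every partial homomorphism of H to itself of size two extends to a full homomorphism from H into itself; and (3) there are distinct i, i' ∈ G and j, j' ∈ H such that {(i,j),(i',j')} is a partial homomorphism from G to H that does not extend to a homomorphism G → H. Then the class RRA of representable relation algebras is not the class of models of any first-order theory in the language of relation algebras using only the variables x_0,...,x_{c-1}. -/

import Mathlib

/-! ## Binary structures -/

/-- A binary structure: a carrier set together with a family of binary relations
indexed by a signature `σ` consisting of binary predicate symbols. -/
structure BinStruct (σ : Type) : Type 1 where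
  V : Type
  rel : σ → V → V → Prop

variable {σ : Type}

/-- The partial map `{(i,j),(i',j')}` is a partial homomorphism from `G` to `H`:
for all distinct elements of the domain and every binary predicate, the predicate
is preserved. -/
def PartialHom2 (G H : BinStruct σ) (i i' : G.V) (j j' : H.V) : Prop :=
  ∀ b : σ, (G.rel b i i' → H.rel b j j') ∧ (G.rel b i' i → H.rel b j' j)

/-- `f` is a (total) homomorphism from `G` to `H`. -/
def IsHom (G H : BinStruct σ) (f : G.V → H.V) : Prop :=
  ∀ (b : σ) (u v : G.V), u ≠ v → G.rel b u v → H.rel b (f u) (f v)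

/-! ## The rainbow atom structure -/

/-- Atoms of the rainbow relation algebra `B_{G,H}`. -/
inductive RbAtom (α β : Type) : Type
  | id : RbAtom α β
  | black : RbAtom α β
  | white : RbAtom α β
  | yellow : RbAtom α β
  | green (i : α) : RbAtom α β
  | red (j j' : β) : RbAtom α β

namespace RbAtom

/-- Converse of an atom: all atoms are self-converse except `(red j j')⌣ = red j' j`. -/
def conv {α β : Type} : RbAtom α β → RbAtom α β
  | red j j' => red j' j
  | a => a

end RbAtom

/-- The generating forbidden triples (I)–(VI) of the rainbow algebra `B_{G,H}`. -/
inductive BaseForbidden (G H : BinStruct σ) :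
    RbAtom G.V H.V → RbAtom G.V H.V → RbAtom G.V H.V → Prop
  | ident (a b : RbAtom G.V H.V) : a ≠ b → BaseForbidden G H .id a b
  | ggg (i i' i'' : G.V) : BaseForbidden G H (.green i) (.green i') (.green i'')
  | ggw (i i' : G.V) : BaseForbidden G H (.green i) (.green i') .white
  | yyy : BaseForbidden G H .yellow .yellow .yellow
  | yyb : BaseForbidden G H .yellow .yellow .black
  | rrr (j₁ j₂ j₂' j₃' j₁s j₃s : H.V) : ¬(j₁ = j₁s ∧ j₂ = j₂' ∧ j₃' = j₃s) →
      BaseForbidden G H (.red j₁ j₂) (.red j₂' j₃') (.red j₁s j₃s)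
  | ggr (i i' : G.V) (j j' : H.V) : ¬(i ≠ i' ∧ PartialHom2 G H i i' j j') →
      BaseForbidden G H (.green i) (.green i') (.red j j')

/-- A triple of atoms is forbidden if it is a Peircean transform of one of the
generating forbidden triples. -/
def Forbidden (G H : BinStruct σ) (a b c : RbAtom G.V H.V) : Prop :=
  ∃ x y z : RbAtom G.V H.V, BaseForbidden G H x y z ∧
    ((a, b, c) = (x, y, z) ∨ (a, b, c) = (x.conv, z, y) ∨ (a, b, c) = (z, y.conv, x) ∨
     (a, b, c) = (y.conv, x.conv, z.conv) ∨ (a, b, c) = (y, z.conv, x.conv) ∨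
     (a, b, c) = (z.conv, x, y.conv))

/-! ## The rainbow relation algebra (complex algebra of the atom structure) -/

/-- Composition in the complex algebra: `c ≤ X ; Y` iff there are `a ∈ X`, `b ∈ Y`
such that the triple `(a, b, c)` is not forbidden. -/
def rbComp (G H : BinStruct σ) (X Y : Set (RbAtom G.V H.V)) : Set (RbAtom G.V H.V) :=
  {c | ∃ a ∈ X, ∃ b ∈ Y, ¬ Forbidden G H a b c}

/-- Converse in the complex algebra. -/
def rbConv {α β : Type} (X : Set (RbAtom α β)) : Set (RbAtom α β) :=
  {a | RbAtom.conv a ∈ X}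

/-- The rainbow relation algebra `B_{G,H}` is completely representable: there is an
isomorphism onto an algebra of binary relations on some base set (with union,
complement, relational composition, converse and the identity relation) carrying
all suprema to unions. -/
def CompletelyRepresentable (G H : BinStruct σ) : Prop :=
  ∃ (X : Type) (θ : Set (RbAtom G.V H.V) → Set (X × X)),
    Function.Injective θ ∧
    (∀ S : Set (Set (RbAtom G.V H.V)), θ (⋃₀ S) = ⋃₀ (θ '' S)) ∧
    (∀ A : Set (RbAtom G.V H.V), θ Aᶜ = θ Set.univ \ θ A) ∧
    (∀ A B : Set (RbAtom G.V H.V),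
        θ (rbComp G H A B) = {p : X × X | ∃ z : X, (p.1, z) ∈ θ A ∧ (z, p.2) ∈ θ B}) ∧
    (∀ A : Set (RbAtom G.V H.V), θ (rbConv A) = {p : X × X | (p.2, p.1) ∈ θ A}) ∧
    θ {RbAtom.id} = {p : X × X | p.1 = p.2}

/-! ## The colouring game -/

/-- The set of vertices coloured (according to the interpretation `g`) with exactly
the colours in a palette `π`. -/
def PaletteSet {V : Type} {c : ℕ} (g : Fin c → Set V) (π : Set (Fin c)) : Set V :=
  {x | ∀ t : Fin c, x ∈ g t ↔ t ∈ π}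

/-- The position `(g,h)` of the `c`-colour colouring game on `(G,H)` is an immediate
win for ∀: (C1) some palette is realised in exactly one of the two structures, or
(C2) some pair of palettes and binary predicate produce a nonempty intersection in
exactly one of the two structures. -/
def ColWin (G H : BinStruct σ) (c : ℕ)
    (g : Fin c → Set G.V) (h : Fin c → Set H.V) : Prop :=
  (∃ π : Set (Fin c), Xor' (PaletteSet g π = ∅) (PaletteSet h π = ∅)) ∨
  (∃ (π π' : Set (Fin c)) (b : σ),
      Xor' ((PaletteSet g π ×ˢ PaletteSet g π') ∩ {q | G.rel b q.1 q.2} = ∅)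
           ((PaletteSet h π ×ˢ PaletteSet h π') ∩ {q | H.rel b q.1 q.2} = ∅))

/-- `∃` has a winning strategy in the infinitely long `c`-colour colouring game
`G^c_ω(G,H)` starting from the position `(g,h)`: there is an invariant family of safe
positions containing `(g,h)`, avoiding wins for `∀`, such that every move of `∀`
(a colour together with a set of vertices of either structure) has a response by `∃`
(a set of vertices of the other structure) staying in the family. -/
def ExSurvives (G H : BinStruct σ) (c : ℕ)
    (g : Fin c → Set G.V) (h : Fin c → Set H.V) : Prop :=
  ∃ Inv : (Fin c → Set G.V) → (Fin c → Set H.V) → Prop,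
    Inv g h ∧
    (∀ g' h', Inv g' h' → ¬ ColWin G H c g' h') ∧
    (∀ g' h', Inv g' h' → ∀ (t : Fin c) (S : Set G.V), ∃ T : Set H.V,
        Inv (Function.update g' t S) (Function.update h' t T)) ∧
    (∀ g' h', Inv g' h' → ∀ (t : Fin c) (T : Set H.V), ∃ S : Set G.V,
        Inv (Function.update g' t S) (Function.update h' t T))

/-- `∀` can force a win in the colouring game from the position `(g,h)`:
either the position is already a win for him, or he has a move such that
every response of `∃` leads to a position from which he can force a win. -/
inductive AllForcesWin (G H : BinStruct σ) (c : ℕ) :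
    (Fin c → Set G.V) → (Fin c → Set H.V) → Prop
  | now (g h) : ColWin G H c g h → AllForcesWin G H c g h
  | moveG (g h) (t : Fin c) (S : Set G.V) :
      (∀ T : Set H.V,
        AllForcesWin G H c (Function.update g t S) (Function.update h t T)) →
      AllForcesWin G H c g h
  | moveH (g h) (t : Fin c) (T : Set H.V) :
      (∀ S : Set G.V,
        AllForcesWin G H c (Function.update g t S) (Function.update h t T)) →
      AllForcesWin G H c g h

/-! ## Relation algebras, terms and formulas -/

/-- A relation algebra (Tarski's axioms): a Boolean algebra with an associative,
additive composition `;` with two-sided identity `1'`, and an additive involutive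
converse satisfying the Peircean/Tarski axioms. -/
class RelationAlgebra (A : Type) extends BooleanAlgebra A where
  comp : A → A → A
  conv : A → A
  one' : A
  comp_assoc : ∀ x y z : A, comp (comp x y) z = comp x (comp y z)
  comp_one' : ∀ x : A, comp x one' = x
  one'_comp : ∀ x : A, comp one' x = x
  sup_comp : ∀ x y z : A, comp (x ⊔ y) z = comp x z ⊔ comp y z
  comp_sup : ∀ x y z : A, comp x (y ⊔ z) = comp x y ⊔ comp x z
  conv_conv : ∀ x : A, conv (conv x) = x
  conv_sup : ∀ x y : A, conv (x ⊔ y) = conv x ⊔ conv y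
  conv_comp : ∀ x y : A, conv (comp x y) = comp (conv y) (conv x)
  tarski : ∀ x y : A, comp (conv x) (comp x y)ᶜ ⊓ y = ⊥

/-- A relation algebra is representable (a member of RRA) if it is isomorphic to a
subalgebra of an algebra of binary relations on some base set, with union,
complement, relational composition, converse and the identity relation. -/
def Representable (A : Type) [RelationAlgebra A] : Prop :=
  ∃ (X : Type) (θ : A → Set (X × X)),
    Function.Injective θ ∧
    (∀ a b : A, θ (a ⊔ b) = θ a ∪ θ b) ∧
    (∀ a : A, θ aᶜ = θ ⊤ \ θ a) ∧
    (∀ a b : A, θ (RelationAlgebra.comp a b) =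
        {p : X × X | ∃ z : X, (p.1, z) ∈ θ a ∧ (z, p.2) ∈ θ b}) ∧
    (∀ a : A, θ (RelationAlgebra.conv a) = {p : X × X | (p.2, p.1) ∈ θ a}) ∧
    θ RelationAlgebra.one' = {p : X × X | p.1 = p.2}

/-- A signature of relation-algebra operations on a carrier `A` (used to interpret
relation-algebra terms both in abstract relation algebras and in the concrete
rainbow complex algebras). -/
structure RAOps (A : Type) where
  bot : A
  top : A
  one' : A
  sup : A → A → A
  inf : A → A → A
  compl : A → A
  comp : A → A → A
  conv : A → A

/-- The operations of an abstract relation algebra. -/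
def RAOps.ofClass (A : Type) [RelationAlgebra A] : RAOps A :=
  ⟨⊥, ⊤, RelationAlgebra.one', (· ⊔ ·), (· ⊓ ·), (·ᶜ), RelationAlgebra.comp,
    RelationAlgebra.conv⟩

/-- The operations of the rainbow complex algebra `B_{G,H}`. -/
def rbOps (G H : BinStruct σ) : RAOps (Set (RbAtom G.V H.V)) :=
  ⟨∅, Set.univ, {RbAtom.id}, (· ∪ ·), (· ∩ ·), (·ᶜ), rbComp G H, rbConv⟩

/-- Terms in the language of relation algebras with variables `x_0, …, x_{c-1}`. -/
inductive RATerm (c : ℕ) : Type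
  | var (i : Fin c) : RATerm c
  | bot : RATerm c
  | top : RATerm c
  | one' : RATerm c
  | sup (s t : RATerm c) : RATerm c
  | inf (s t : RATerm c) : RATerm c
  | compl (t : RATerm c) : RATerm c
  | comp (s t : RATerm c) : RATerm c
  | conv (t : RATerm c) : RATerm c

namespace RATerm

variable {c : ℕ} {A : Type}

/-- Evaluation of a term under a total assignment of the variables. -/
def eval (ops : RAOps A) (v : Fin c → A) : RATerm c → A
  | var i => v i
  | bot => ops.bot
  | top => ops.top
  | one' => ops.one'
  | sup s t => ops.sup (s.eval ops v) (t.eval ops v)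
  | inf s t => ops.inf (s.eval ops v) (t.eval ops v)
  | compl t => ops.compl (t.eval ops v)
  | comp s t => ops.comp (s.eval ops v) (t.eval ops v)
  | conv t => ops.conv (t.eval ops v)

/-- Evaluation of a term under a partial assignment of the variables; defined
just when every variable of the term lies in the domain of the assignment. -/
def evalo (ops : RAOps A) (v : Fin c → Option A) : RATerm c → Option A
  | var i => v i
  | bot => some ops.bot
  | top => some ops.top
  | one' => some ops.one'
  | sup s t => (s.evalo ops v).bind fun a => (t.evalo ops v).map fun b => ops.sup a b
  | inf s t => (s.evalo ops v).bind fun a => (t.evalo ops v).map fun b => ops.inf a b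
  | compl t => (t.evalo ops v).map ops.compl
  | comp s t => (s.evalo ops v).bind fun a => (t.evalo ops v).map fun b => ops.comp a b
  | conv t => (t.evalo ops v).map ops.conv

/-- The variables occurring in a term. -/
def vars : RATerm c → Finset (Fin c)
  | var i => {i}
  | bot => ∅
  | top => ∅
  | one' => ∅
  | sup s t => s.vars ∪ t.vars
  | inf s t => s.vars ∪ t.vars
  | compl t => t.vars
  | comp s t => s.vars ∪ t.vars
  | conv t => t.vars

end RATerm

/-- First-order formulas in the language of relation algebras with variables
`x_0, …, x_{c-1}`. -/
inductive RAFormula (c : ℕ) : Type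
  | eq (s t : RATerm c) : RAFormula c
  | not (φ : RAFormula c) : RAFormula c
  | and (φ ψ : RAFormula c) : RAFormula c
  | ex (i : Fin c) (φ : RAFormula c) : RAFormula c

namespace RAFormula

variable {c : ℕ} {A : Type}

/-- Quantifier depth of a formula. -/
def qd : RAFormula c → ℕ
  | eq _ _ => 0
  | not φ => φ.qd
  | and φ ψ => max φ.qd ψ.qd
  | ex _ φ => φ.qd + 1

/-- Free variables of a formula. -/
def freeVars : RAFormula c → Finset (Fin c)
  | eq s t => s.vars ∪ t.vars
  | not φ => φ.freeVars
  | and φ ψ => φ.freeVars ∪ ψ.freeVars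
  | ex i φ => φ.freeVars \ {i}

/-- Satisfaction of a formula under a total assignment of the variables. -/
def Sat (ops : RAOps A) (v : Fin c → A) : RAFormula c → Prop
  | eq s t => s.eval ops v = t.eval ops v
  | not φ => ¬ Sat ops v φ
  | and φ ψ => Sat ops v φ ∧ Sat ops v ψ
  | ex i φ => ∃ a : A, Sat ops (Function.update v i a) φ

end RAFormula

/-! ## The pebble equivalence game on relation algebras -/

/-- The position `(α,β)` of the pebble game is good for `∃`: the two partial maps have
the same domain and the correspondence `t^α ↦ t^β` between the generated subalgebras
(given by evaluating terms whose variables lie in the common domain) is a well-defined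
isomorphism. -/
def GoodPos {A B : Type} (opsA : RAOps A) (opsB : RAOps B) (c : ℕ)
    (α : Fin c → Option A) (β : Fin c → Option B) : Prop :=
  (∀ i : Fin c, (α i).isSome ↔ (β i).isSome) ∧
  ∀ s t : RATerm c,
    (s.evalo opsA α = t.evalo opsA α ↔ s.evalo opsB β = t.evalo opsB β)

/-- `∃` has a winning strategy in the `c`-pebble, `n`-round equivalence game
`Γ^c_n(A, α, B, β)` (for finite `n`). -/
def ExWinsPebble {A B : Type} (opsA : RAOps A) (opsB : RAOps B) (c : ℕ) :
    ℕ → (Fin c → Option A) → (Fin c → Option B) → Prop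
  | 0, α, β => GoodPos opsA opsB c α β
  | n + 1, α, β => GoodPos opsA opsB c α β ∧
      (∀ (t : Fin c) (a : A), ∃ b : B,
        ExWinsPebble opsA opsB c n
          (Function.update α t (some a)) (Function.update β t (some b))) ∧
      (∀ (t : Fin c) (b : B), ∃ a : A,
        ExWinsPebble opsA opsB c n
          (Function.update α t (some a)) (Function.update β t (some b)))

/-- `∃` has a winning strategy in the infinitely long `c`-pebble equivalence game
`Γ^c_ω(A, α, B, β)`. -/
def ExWinsPebbleOmega {A B : Type} (opsA : RAOps A) (opsB : RAOps B) (c : ℕ)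
    (α : Fin c → Option A) (β : Fin c → Option B) : Prop :=
  ∃ Inv : (Fin c → Option A) → (Fin c → Option B) → Prop,
    Inv α β ∧
    (∀ α' β', Inv α' β' → GoodPos opsA opsB c α' β') ∧
    (∀ α' β', Inv α' β' → ∀ (t : Fin c) (a : A), ∃ b : B,
        Inv (Function.update α' t (some a)) (Function.update β' t (some b))) ∧
    (∀ α' β', Inv α' β' → ∀ (t : Fin c) (b : B), ∃ a : A,
        Inv (Function.update α' t (some a)) (Function.update β' t (some b)))

/-- `∃` has a winning strategy in the `c`-pebble, `n`-round equivalence game, where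
`n ≤ ω` (`n : ℕ∞`). -/
def ExWinsPebbleE {A B : Type} (opsA : RAOps A) (opsB : RAOps B) (c : ℕ)
    (n : ℕ∞) (α : Fin c → Option A) (β : Fin c → Option B) : Prop :=
  match n with
  | ⊤ => ExWinsPebbleOmega opsA opsB c α β
  | (m : ℕ) => ExWinsPebble opsA opsB c m α β

/-! ## The mirroring strategy -/

/-- The set of green subscripts of an element of a rainbow algebra. -/
def greenPart {V F : Type} (x : Set (RbAtom V F)) : Set V := {i | RbAtom.green i ∈ x}

/-- The element of the other rainbow algebra with the same non-green part as `x` and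
green part determined by `Y`. -/
def mirrorElt {V W F : Type} (x : Set (RbAtom V F)) (Y : Set W) : Set (RbAtom W F) :=
  fun a => match a with
  | RbAtom.green j => j ∈ Y
  | RbAtom.id => RbAtom.id ∈ x
  | RbAtom.black => RbAtom.black ∈ x
  | RbAtom.white => RbAtom.white ∈ x
  | RbAtom.yellow => RbAtom.yellow ∈ x
  | RbAtom.red j j' => RbAtom.red j j' ∈ x

/-- Inclusion of the first `c` colours into the `c+3` colours of the parallel game. -/
def liftCol {c : ℕ} (t : Fin c) : Fin (c + 3) := Fin.castLE (Nat.le_add_right c 3) t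

/-- A combined state of a play of the pebble game `Γ^c(B_{G,F}, B_{H,F})` together
with the parallel play of the colouring game `G^{c+3}_ω(G,H)`, recording also the
set of colours used so far. -/
structure MirrorState (c : ℕ) (G H F : BinStruct σ) : Type where
  α : Fin c → Option (Set (RbAtom G.V F.V))
  β : Fin c → Option (Set (RbAtom H.V F.V))
  g : Fin (c + 3) → Set G.V
  h : Fin (c + 3) → Set H.V
  used : Set (Fin (c + 3))

/-- The initial state: no pebbles placed, all vertices uncoloured, no colour used. -/
def mirrorInit (c : ℕ) (G H F : BinStruct σ) : MirrorState c G H F :=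
  ⟨fun _ => none, fun _ => none, fun _ => ∅, fun _ => ∅, ∅⟩

/-- `Inv` is a winning invariant witnessing a winning strategy for `∃` in the
colouring game `G^c_ω(G,H)` (from the initial position). -/
def IsColInvariant (G H : BinStruct σ) (c : ℕ)
    (Inv : (Fin c → Set G.V) → (Fin c → Set H.V) → Prop) : Prop :=
  Inv (fun _ => ∅) (fun _ => ∅) ∧
  (∀ g h, Inv g h → ¬ ColWin G H c g h) ∧
  (∀ g h, Inv g h → ∀ (t : Fin c) (S : Set G.V), ∃ T : Set H.V,
      Inv (Function.update g t S) (Function.update h t T)) ∧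
  (∀ g h, Inv g h → ∀ (t : Fin c) (T : Set H.V), ∃ S : Set G.V,
      Inv (Function.update g t S) (Function.update h t T))

/-- One round of the pebble game `Γ^c(B_{G,F}, B_{H,F})` in which `∃` plays the
mirroring strategy induced by the colouring-game winning strategy witnessed by the
invariant `Inv`: when `∀` plays pebble `t` on an element of one algebra, `∃` colours
the set of its green subscripts with colour `t` in the parallel colouring game,
obtains a response keeping the parallel play inside `Inv`, and answers with the
element with identical non-green part and green part determined by that response. -/
inductive MirrorStep (G H F : BinStruct σ) (c : ℕ)
    (Inv : (Fin (c + 3) → Set G.V) → (Fin (c + 3) → Set H.V) → Prop) :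
    MirrorState c G H F → MirrorState c G H F → Prop
  | fromG (s : MirrorState c G H F) (t : Fin c) (x : Set (RbAtom G.V F.V)) (Y : Set H.V) :
      Inv (Function.update s.g (liftCol t) (greenPart x))
          (Function.update s.h (liftCol t) Y) →
      MirrorStep G H F c Inv s
        ⟨Function.update s.α t (some x),
         Function.update s.β t (some (mirrorElt x Y)),
         Function.update s.g (liftCol t) (greenPart x),
         Function.update s.h (liftCol t) Y,
         insert (liftCol t) s.used⟩
  | fromH (s : MirrorState c G H F) (t : Fin c) (y : Set (RbAtom H.V F.V)) (X : Set G.V) :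
      Inv (Function.update s.g (liftCol t) X)
          (Function.update s.h (liftCol t) (greenPart y)) →
      MirrorStep G H F c Inv s
        ⟨Function.update s.α t (some (mirrorElt y X)),
         Function.update s.β t (some y),
         Function.update s.g (liftCol t) X,
         Function.update s.h (liftCol t) (greenPart y),
         insert (liftCol t) s.used⟩

/-- The states reachable in a play of the pebble game `Γ^c(B_{G,F}, B_{H,F})`
during which `∃` plays using the mirroring strategy. -/
def MirrorReachable (G H F : BinStruct σ) (c : ℕ)
    (Inv : (Fin (c + 3) → Set G.V) → (Fin (c + 3) → Set H.V) → Prop)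
    (s : MirrorState c G H F) : Prop :=
  Relation.ReflTransGen (MirrorStep G H F c Inv) (mirrorInit c G H F) s

/-!
For each pair of binary structures there is a rainbow relation algebra `B_{G,H}`, whose green
atoms are subscripted by points of `G` and whose red atoms are subscripted by pairs of points of
`H`. In a representation, the nodes joined to a fixed edge by a green and a yellow edge form a
cone; the reds on a cone with one node for each green, of which there are finitely many, define a
homomorphism `G → H` that extends a given partial homomorphism of size two. As some such partial
homomorphism does not extend, `B_{G,H}` is not representable. But `B_{H,H}` is: the reds on a cone
can always be chosen according to a homomorphism, so a network can be extended step by step until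
it is saturated.

A winning strategy in the colouring game with `n ≥ c + 2` colours shows that the two algebras agree
on all formulas in `c` variables. Colour `t` records the greens below the value of the variable
`x_t`. The two spare colours turn a position of the colouring game into a back-and-forth system of
partial isomorphisms between `G` and `H` that respect the recorded colours. Two elements match if
they have the same non-green atoms and corresponding greens, and matching is preserved by all the
operations of the algebras, since whether a triple of atoms is forbidden depends on greens through
their equality and the binary predicates alone.
-/

variable {σ : Type}

/-! ### Atoms and consistent triples -/

namespace RbAtom

variable {α β : Type} {a : RbAtom α β}

@[simp]
theorem conv_conv (a : RbAtom α β) : a.conv.conv = a := by cases a <;> rfl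

@[simp]
theorem conv_inj {b : RbAtom α β} : a.conv = b.conv ↔ a = b :=
  ⟨fun h => by simpa using congrArg conv h, congrArg conv⟩

@[simp]
theorem conv_eq_id : a.conv = id ↔ a = id := by cases a <;> simp [conv]

@[simp]
theorem conv_eq_yellow : a.conv = yellow ↔ a = yellow := by cases a <;> simp [conv]

@[simp]
theorem conv_eq_green {i : α} : a.conv = green i ↔ a = green i := by cases a <;> simp [conv]

instance [Countable α] [Countable β] : Countable (RbAtom α β) := by
  let code : RbAtom α β → Fin 4 ⊕ α ⊕ β × β
    | id => .inl 0
    | black => .inl 1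
    | white => .inl 2
    | yellow => .inl 3
    | green i => .inr (.inl i)
    | red j j' => .inr (.inr (j, j'))
  have code_injective : Function.Injective code := by
    intro a b h
    cases a <;> cases b <;> simp_all [code]
  exact code_injective.countable

end RbAtom

theorem PartialHom2.swap {G H : BinStruct σ} {i i' : G.V} {j j' : H.V}
    (h : PartialHom2 G H i i' j j') : PartialHom2 G H i' i j' j :=
  fun b => (h b).symm

theorem partialHom2_comm {G H : BinStruct σ} {i i' : G.V} {j j' : H.V} :
    PartialHom2 G H i i' j j' ↔ PartialHom2 G H i' i j' j :=
  ⟨.swap, .swap⟩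

theorem IsHom.partialHom2 {G H : BinStruct σ} {f : G.V → H.V} (hf : IsHom G H f) {i i' : G.V}
    (hi : i ≠ i') : PartialHom2 G H i i' (f i) (f i') :=
  fun b => ⟨hf b i i' hi, hf b i' i hi.symm⟩

open RbAtom hiding id

/-- The triples of atoms that are not forbidden, listed by their colours; think of `a`, `b`, `c`
as labelling the edges `(x, z)`, `(z, y)`, `(x, y)` of a triangle. -/
def ConsistentTriple (G H : BinStruct σ) :
    RbAtom G.V H.V → RbAtom G.V H.V → RbAtom G.V H.V → Prop
  | .id, b, c => b = c
  | a, .id, c => a = c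
  | a, b, .id => a = b.conv
  | .green _, .green _, .green _ => False
  | .green _, .green _, .white => False
  | .green _, .white, .green _ => False
  | .white, .green _, .green _ => False
  | .yellow, .yellow, .yellow => False
  | .yellow, .yellow, .black => False
  | .yellow, .black, .yellow => False
  | .black, .yellow, .yellow => False
  | .red j₁ j₂, .red j₂' j₃, .red j₁' j₃' => j₁ = j₁' ∧ j₂ = j₂' ∧ j₃ = j₃'
  | .green i, .green i', .red j j' => i ≠ i' ∧ PartialHom2 G H i i' j j'
  | .green i, .red j j', .green i' => i ≠ i' ∧ PartialHom2 G H i i' j j'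
  | .red j j', .green i, .green i' => i ≠ i' ∧ PartialHom2 G H i' i j j'
  | _, _, _ => True

section ConsistentTriple

variable {G H : BinStruct σ} {a b c d e : RbAtom G.V H.V}

namespace ConsistentTriple

@[simp]
theorem id_left : ConsistentTriple G H .id a b ↔ a = b := by simp [ConsistentTriple]

@[simp]
theorem id_right : ConsistentTriple G H a .id b ↔ a = b := by cases a <;> simp [ConsistentTriple]

@[simp]
theorem to_id : ConsistentTriple G H a b .id ↔ a = b.conv := by
  cases a <;> cases b <;> simp [ConsistentTriple, conv]

theorem rotate (h : ConsistentTriple G H a b c) : ConsistentTriple G H a.conv c b := by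
  cases a <;> cases b <;> cases c <;> simp_all [ConsistentTriple, conv]
  grind [partialHom2_comm]

theorem converse (h : ConsistentTriple G H a b c) :
    ConsistentTriple G H b.conv a.conv c.conv := by
  cases a <;> cases b <;> cases c <;> simp_all [ConsistentTriple, conv] <;>
    grind [partialHom2_comm]

theorem flip (h : ConsistentTriple G H a b c) : ConsistentTriple G H c b.conv a := by
  simpa using h.converse.rotate.converse

theorem not_baseForbidden (h : ConsistentTriple G H a b c) : ¬ BaseForbidden G H a b c := by
  rintro (⟨hne⟩ | _ | _ | _ | _ | ⟨hne⟩ | ⟨hne⟩) <;> simp_all [ConsistentTriple]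

theorem not_forbidden (h : ConsistentTriple G H a b c) : ¬ Forbidden G H a b c := by
  rintro ⟨x, y, z, hxyz, hperm⟩
  simp only [Prod.mk.injEq] at hperm
  refine not_baseForbidden ?_ hxyz
  rcases hperm with ⟨rfl, rfl, rfl⟩ | ⟨rfl, rfl, rfl⟩ | ⟨rfl, rfl, rfl⟩ | ⟨rfl, rfl, rfl⟩ |
    ⟨rfl, rfl, rfl⟩ | ⟨rfl, rfl, rfl⟩
  · exact h
  · simpa using h.rotate
  · simpa using h.flip
  · simpa using h.converse
  · simpa using h.rotate.converse
  · simpa using h.flip.converse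

end ConsistentTriple

theorem forbidden_of_not_consistentTriple (h : ¬ ConsistentTriple G H a b c) :
    Forbidden G H a b c := by
  unfold ConsistentTriple at h
  split at h
  · exact ⟨_, _, _, .ident _ _ h, by simp⟩
  · exact ⟨_, _, _, .ident c.conv a.conv (by simpa [eq_comm] using h), by simp⟩
  · exact ⟨_, _, _, .ident b.conv a (Ne.symm h), by simp⟩
  · exact ⟨_, _, _, .ggg _ _ _, .inl rfl⟩
  · exact ⟨_, _, _, .ggw _ _, .inl rfl⟩
  · exact ⟨_, _, _, .ggw _ _, .inr (.inl rfl)⟩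
  · exact ⟨_, _, _, .ggw _ _, .inr (.inr (.inl rfl))⟩
  · exact ⟨_, _, _, .yyy, .inl rfl⟩
  · exact ⟨_, _, _, .yyb, .inl rfl⟩
  · exact ⟨_, _, _, .yyb, .inr (.inl rfl)⟩
  · exact ⟨_, _, _, .yyb, .inr (.inr (.inl rfl))⟩
  · exact ⟨_, _, _, .rrr _ _ _ _ _ _ (by tauto), .inl rfl⟩
  · exact ⟨_, _, _, .ggr _ _ _ _ h, .inl rfl⟩
  · exact ⟨_, _, _, .ggr _ _ _ _ h, .inr (.inl rfl)⟩
  · exact ⟨_, _, _, .ggr _ _ _ _ (by grind [partialHom2_comm]), .inr (.inr (.inl rfl))⟩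
  · exact absurd trivial h

theorem not_forbidden_iff : ¬ Forbidden G H a b c ↔ ConsistentTriple G H a b c :=
  ⟨Not.imp_symm forbidden_of_not_consistentTriple, ConsistentTriple.not_forbidden⟩

namespace ConsistentTriple

theorem black_right (ha : a ≠ .id) (hb : b ≠ .id) (h : ¬ (a = yellow ∧ b = yellow)) :
    ConsistentTriple G H a b black := by
  cases a <;> cases b <;> simp_all [ConsistentTriple]

theorem white_right (ha : a ≠ .id) (hb : b ≠ .id) (h : ¬ ∃ i i', a = green i ∧ b = green i') :
    ConsistentTriple G H a b white := by
  cases a <;> cases b <;> simp_all [ConsistentTriple]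

end ConsistentTriple

end ConsistentTriple

/-! ### The rainbow relation algebra -/

/-- Every pair of distinct points of `G` is the domain of a partial homomorphism into `H`; this is
what associativity of the rainbow algebra of `G` and `H` requires. -/
class PairHom (G H : BinStruct σ) : Prop where
  exists_partialHom2 (i i' : G.V) : i ≠ i' → ∃ j j' : H.V, PartialHom2 G H i i' j j'

instance (H : BinStruct σ) : PairHom H H where
  exists_partialHom2 i i' _ := ⟨i, i', fun _ => ⟨fun h => h, fun h => h⟩⟩

section RainbowAlgebra

variable {G H : BinStruct σ} {a b c d e : RbAtom G.V H.V}

theorem mem_rbComp {X Y : Set (RbAtom G.V H.V)} :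
    c ∈ rbComp G H X Y ↔ ∃ a ∈ X, ∃ b ∈ Y, ConsistentTriple G H a b c := by
  simp only [rbComp, Set.mem_ofPred_eq, not_forbidden_iff]

@[simp]
theorem mem_rbConv {α β : Type} {X : Set (RbAtom α β)} {a : RbAtom α β} :
    a ∈ rbConv X ↔ a.conv ∈ X :=
  Iff.rfl

theorem exists_consistentTriple_of_green [PairHom G H] (i i' : G.V) (ha : a ≠ .id)
    (hb : b ≠ .id) :
    ∃ e, ConsistentTriple G H (green i) (green i') e ∧ ConsistentTriple G H a b e := by
  by_cases hy : a = yellow ∧ b = yellow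
  · obtain ⟨rfl, rfl⟩ := hy
    rcases eq_or_ne i i' with rfl | hi
    · exact ⟨.id, ConsistentTriple.to_id.2 rfl, ConsistentTriple.to_id.2 rfl⟩
    · obtain ⟨j, j', hj⟩ := PairHom.exists_partialHom2 (H := H) i i' hi
      exact ⟨red j j', ⟨hi, hj⟩, trivial⟩
  · exact ⟨black, .black_right (by simp) (by simp) (by simp), .black_right ha hb hy⟩

theorem exists_consistentTriple [PairHom G H] (ha : a ≠ .id) (hb : b ≠ .id)
    (hc : c ≠ .id) (hd : d ≠ .id) :
    ∃ e, ConsistentTriple G H a b e ∧ ConsistentTriple G H c d e := by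
  by_cases hab : ∃ i i', a = green i ∧ b = green i'
  · obtain ⟨i, i', rfl, rfl⟩ := hab
    exact exists_consistentTriple_of_green i i' hc hd
  by_cases hcd : ∃ i i', c = green i ∧ d = green i'
  · obtain ⟨i, i', rfl, rfl⟩ := hcd
    obtain ⟨e, he, he'⟩ := exists_consistentTriple_of_green i i' ha hb
    exact ⟨e, he', he⟩
  · exact ⟨white, .white_right ha hb hab, .white_right hc hd hcd⟩

theorem ConsistentTriple.assoc_right [PairHom G H] (habe : ConsistentTriple G H a b e)
    (hecd : ConsistentTriple G H e c d) :
    ∃ f, ConsistentTriple G H b c f ∧ ConsistentTriple G H a f d := by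
  rcases eq_or_ne a .id with rfl | ha
  · obtain rfl := id_left.1 habe
    exact ⟨d, hecd, by simp⟩
  rcases eq_or_ne b .id with rfl | hb
  · obtain rfl := id_right.1 habe
    exact ⟨c, by simp, hecd⟩
  rcases eq_or_ne c .id with rfl | hc
  · obtain rfl := id_right.1 hecd
    exact ⟨b, by simp, habe⟩
  rcases eq_or_ne d .id with rfl | hd
  · obtain rfl := to_id.1 hecd
    exact ⟨a.conv, by simpa using habe.flip.converse, by simp⟩
  obtain ⟨f, hbc, had⟩ := exists_consistentTriple hb hc (c := a.conv) (by simpa using ha) hd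
  exact ⟨f, hbc, by simpa using had.rotate⟩

theorem ConsistentTriple.assoc_left [PairHom G H] (hbce : ConsistentTriple G H b c e)
    (haed : ConsistentTriple G H a e d) :
    ∃ f, ConsistentTriple G H a b f ∧ ConsistentTriple G H f c d := by
  obtain ⟨f, hf, hf'⟩ := hbce.converse.assoc_right haed.converse
  exact ⟨f.conv, by simpa using hf.converse, by simpa using hf'.converse⟩

theorem rbComp_assoc [PairHom G H] (X Y Z : Set (RbAtom G.V H.V)) :
    rbComp G H (rbComp G H X Y) Z = rbComp G H X (rbComp G H Y Z) := by
  ext d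
  simp only [mem_rbComp]
  constructor
  · rintro ⟨e, ⟨a, ha, b, hb, habe⟩, c, hc, hecd⟩
    obtain ⟨f, hf, hf'⟩ := habe.assoc_right hecd
    exact ⟨a, ha, f, ⟨b, hb, c, hc, hf⟩, hf'⟩
  · rintro ⟨a, ha, e, ⟨b, hb, c, hc, hbce⟩, haed⟩
    obtain ⟨f, hf, hf'⟩ := hbce.assoc_left haed
    exact ⟨f, ⟨a, ha, b, hb, hf⟩, c, hc, hf'⟩

theorem rbConv_rbComp (X Y : Set (RbAtom G.V H.V)) :
    rbConv (rbComp G H X Y) = rbComp G H (rbConv Y) (rbConv X) := by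
  ext c
  simp only [mem_rbConv, mem_rbComp]
  constructor <;> rintro ⟨a, ha, b, hb, h⟩ <;>
    exact ⟨b.conv, by simpa using hb, a.conv, by simpa using ha, by simpa using h.converse⟩

theorem rbComp_rbConv_compl_inter (X Y : Set (RbAtom G.V H.V)) :
    rbComp G H (rbConv X) (rbComp G H X Y)ᶜ ∩ Y = ∅ := by
  rw [Set.eq_empty_iff_forall_notMem]
  rintro c ⟨hc, hcY⟩
  obtain ⟨a, ha, b, hb, h⟩ := mem_rbComp.1 hc
  exact hb (mem_rbComp.2 ⟨a.conv, ha, c, hcY, h.rotate⟩)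

/-- The rainbow algebra `B_{G,H}` as a relation algebra. -/
instance rbRA (G H : BinStruct σ) [PairHom G H] : RelationAlgebra (Set (RbAtom G.V H.V)) where
  __ := (inferInstance : BooleanAlgebra (Set (RbAtom G.V H.V)))
  comp := rbComp G H
  conv := rbConv
  one' := {.id}
  comp_assoc := rbComp_assoc
  comp_one' X := by ext; simp [mem_rbComp]
  one'_comp X := by ext; simp [mem_rbComp]
  sup_comp X Y Z := by
    ext
    simp only [Set.sup_eq_union, mem_rbComp, Set.mem_union, or_and_right, exists_or]
  comp_sup X Y Z := by
    ext
    simp only [Set.sup_eq_union, mem_rbComp, Set.mem_union, or_and_right, and_or_left, exists_or]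
  conv_conv X := by ext; simp
  conv_sup _ _ := rfl
  conv_comp := rbConv_rbComp
  tarski := rbComp_rbConv_compl_inter

end RainbowAlgebra

/-! ### Representations -/

/-- The map `θ` represents the elements of the relation algebra `A` as binary relations on `X`. -/
structure IsRepresentation {A X : Type} [RelationAlgebra A] (θ : A → Set (X × X)) : Prop where
  injective : Function.Injective θ
  map_sup (a b : A) : θ (a ⊔ b) = θ a ∪ θ b
  map_compl (a : A) : θ aᶜ = θ ⊤ \ θ a
  map_comp (a b : A) :
    θ (RelationAlgebra.comp a b) = {p | ∃ z, (p.1, z) ∈ θ a ∧ (z, p.2) ∈ θ b}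
  map_conv (a : A) : θ (RelationAlgebra.conv a) = {p | (p.2, p.1) ∈ θ a}
  map_one' : θ RelationAlgebra.one' = {p | p.1 = p.2}

theorem representable_iff {A : Type} [RelationAlgebra A] :
    Representable A ↔ ∃ (X : Type) (θ : A → Set (X × X)), IsRepresentation θ :=
  ⟨fun ⟨X, θ, hinj, hsup, hcompl, hcomp, hconv, hone⟩ =>
    ⟨X, θ, hinj, hsup, hcompl, hcomp, hconv, hone⟩,
  fun ⟨X, θ, h⟩ =>
    ⟨X, θ, h.injective, h.map_sup, h.map_compl, h.map_comp, h.map_conv, h.map_one'⟩⟩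

namespace IsRepresentation

section RelationAlgebra

variable {A X : Type} [RelationAlgebra A] {θ : A → Set (X × X)} (hθ : IsRepresentation θ)
  {a b : A} {p : X × X}

include hθ

theorem map_bot : θ ⊥ = ∅ := by
  simpa using hθ.map_compl ⊤

theorem monotone : Monotone θ := fun a b hab => by
  rw [← sup_eq_right.2 hab, hθ.map_sup]
  exact Set.subset_union_left

theorem mem_inf (ha : p ∈ θ a) (hb : p ∈ θ b) : p ∈ θ (a ⊓ b) := by
  have hsplit : a ≤ a ⊓ b ⊔ bᶜ := by
    rw [sup_inf_right, sup_compl_eq_top, inf_top_eq]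
    exact le_sup_left
  have hp := hθ.monotone hsplit ha
  rw [hθ.map_sup, hθ.map_compl] at hp
  exact hp.resolve_right fun h => h.2 hb

theorem exists_mem (ha : a ≠ ⊥) : ∃ p, p ∈ θ a := by
  rw [← Set.nonempty_def, Set.nonempty_iff_ne_empty, ← hθ.map_bot]
  exact hθ.injective.ne ha

end RelationAlgebra

variable {G H : BinStruct σ} [PairHom G H] {X : Type}
  {θ : Set (RbAtom G.V H.V) → Set (X × X)} (hθ : IsRepresentation θ)
  {a b c : RbAtom G.V H.V} {S T : Set (RbAtom G.V H.V)} {x y z : X}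

include hθ

theorem map_empty : θ ∅ = ∅ := hθ.map_bot

theorem mem_rbComp_iff : (x, y) ∈ θ (rbComp G H S T) ↔ ∃ z, (x, z) ∈ θ S ∧ (z, y) ∈ θ T :=
  Set.ext_iff.1 (hθ.map_comp S T) (x, y)

theorem mem_conv_atom (h : (x, y) ∈ θ {a}) : (y, x) ∈ θ {a.conv} := by
  have hconv : rbConv {a} = {a.conv} := by
    ext b
    rw [mem_rbConv, Set.mem_singleton_iff, Set.mem_singleton_iff, ← conv_inj, conv_conv]
  rw [← hconv]
  exact (Set.ext_iff.1 (hθ.map_conv {a}) (y, x)).2 h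

theorem atom_mem {p : X × X} (ha : p ∈ θ {a}) (hS : p ∈ θ S) : a ∈ S := by
  by_contra haS
  have hmem : p ∈ θ ({a} ∩ S) := hθ.mem_inf ha hS
  rw [Set.singleton_inter_eq_empty.2 haS, hθ.map_empty] at hmem
  exact hmem

theorem exists_atom_of_finite {p : X × X} (hS : S.Finite) (hpS : p ∈ θ S) :
    ∃ a ∈ S, p ∈ θ {a} := by
  induction S, hS using Set.Finite.induction_on with
  | empty => simp [hθ.map_empty] at hpS
  | @insert a S _ _ ih =>
    rw [Set.insert_eq] at hpS
    rcases (hθ.map_sup {a} S ▸ hpS : p ∈ θ {a} ∪ θ S) with ha | hS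
    · exact ⟨a, Set.mem_insert a S, ha⟩
    · obtain ⟨b, hb, hpb⟩ := ih hS
      exact ⟨b, Set.mem_insert_of_mem a hb, hpb⟩

theorem consistentTriple (ha : (x, z) ∈ θ {a}) (hb : (z, y) ∈ θ {b}) (hc : (x, y) ∈ θ {c}) :
    ConsistentTriple G H a b c := by
  simpa [mem_rbComp] using hθ.atom_mem hc (hθ.mem_rbComp_iff.2 ⟨z, ha, hb⟩)

theorem exists_triangle (hc : (x, y) ∈ θ {c}) (h : ConsistentTriple G H a b c) :
    ∃ z, (x, z) ∈ θ {a} ∧ (z, y) ∈ θ {b} := by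
  have hle : {c} ⊆ rbComp G H {a} {b} := by simpa [mem_rbComp] using h
  exact hθ.mem_rbComp_iff.1 (hθ.monotone hle hc)

end IsRepresentation

section NotRepresentable

variable {G H : BinStruct σ}

theorem rbComp_green_yellow_eq (i k : G.V) :
    rbComp G H {green i} {yellow} = rbComp G H {green k} {yellow} := by
  ext c
  cases c <;> simp [mem_rbComp, ConsistentTriple, conv]

theorem ConsistentTriple.exists_eq_red {k l : G.V} (hkl : k ≠ l) {a : RbAtom G.V H.V}
    (hgreen : ConsistentTriple G H (green k) (green l) a)
    (hyellow : ConsistentTriple G H yellow yellow a) :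
    ∃ j j', a = red j j' ∧ PartialHom2 G H k l j j' := by
  cases a <;> simp_all [ConsistentTriple, conv]

theorem exists_vertex_labelling {V W : Type} [Nontrivial V] {R : V → V → W → W → Prop}
    (swap : ∀ {k l j j'}, R k l j j' → R l k j' j) (total : ∀ k l, k ≠ l → ∃ j j', R k l j j')
    (fst_eq : ∀ {k l m i i' j j'}, k ≠ l → k ≠ m → R k l i i' → R k m j j' → i = j) :
    ∃ f : V → W, ∀ k l, k ≠ l → R k l (f k) (f l) := by
  have hvertex (k : V) : ∃ j l j', k ≠ l ∧ R k l j j' := by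
    obtain ⟨l, hl⟩ := exists_ne k
    obtain ⟨j, j', h⟩ := total k l hl.symm
    exact ⟨j, l, j', hl.symm, h⟩
  choose f s f' hs hf using hvertex
  refine ⟨f, fun k l hkl => ?_⟩
  obtain ⟨j, j', h⟩ := total k l hkl
  rwa [fst_eq (hs k) hkl (hf k) h, fst_eq (hs l) hkl.symm (hf l) (swap h)]

namespace IsRepresentation

variable [PairHom G H] {X : Type} {θ : Set (RbAtom G.V H.V) → Set (X × X)}
  (hθ : IsRepresentation θ) {x y : X} {z : G.V → X}

include hθ

theorem exists_red_edge [Finite H.V] (hxz : ∀ k, (x, z k) ∈ θ {green k})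
    (hzy : ∀ k, (z k, y) ∈ θ {yellow}) {k l : G.V} (hkl : k ≠ l) :
    ∃ j j', (z k, z l) ∈ θ {red j j'} ∧ PartialHom2 G H k l j j' := by
  have hgreen := hθ.mem_rbComp_iff.2 ⟨x, hθ.mem_conv_atom (hxz k), hxz l⟩
  have hyellow := hθ.mem_rbComp_iff.2 ⟨y, hzy k, hθ.mem_conv_atom (hzy l)⟩
  have hred : ∀ a ∈ rbComp G H {green k} {green l} ∩ rbComp G H {yellow} {yellow},
      ∃ j j', a = red j j' ∧ PartialHom2 G H k l j j' := by
    rintro a ⟨hg, hy⟩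
    simp only [mem_rbComp, Set.mem_singleton_iff, exists_eq_left] at hg hy
    exact hg.exists_eq_red hkl hy
  have hfin : (rbComp G H {green k} {green l} ∩ rbComp G H {yellow} {yellow}).Finite := by
    refine (Set.finite_range fun q : H.V × H.V => red q.1 q.2).subset fun a ha => ?_
    obtain ⟨j, j', rfl, -⟩ := hred a ha
    exact ⟨(j, j'), rfl⟩
  obtain ⟨a, ha, hza⟩ := hθ.exists_atom_of_finite hfin (hθ.mem_inf hgreen hyellow)
  obtain ⟨j, j', rfl, hj⟩ := hred a ha
  exact ⟨j, j', hza, hj⟩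

theorem exists_isHom [Finite H.V] (hxz : ∀ k, (x, z k) ∈ θ {green k})
    (hzy : ∀ k, (z k, y) ∈ θ {yellow}) {i i' : G.V} (hi : i ≠ i') {j j' : H.V}
    (hred : (z i, z i') ∈ θ {red j j'}) :
    ∃ f : G.V → H.V, IsHom G H f ∧ f i = j ∧ f i' = j' := by
  have : Nontrivial G.V := ⟨i, i', hi⟩
  have red_inj {u v k k' l l'} (h : (u, v) ∈ θ {red k k'}) (h' : (u, v) ∈ θ {red l l'}) :
      k = l ∧ k' = l' := by
    simpa using hθ.atom_mem h h'
  obtain ⟨f, hf⟩ : ∃ f : G.V → H.V, ∀ k l, k ≠ l →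
      (z k, z l) ∈ θ {red (f k) (f l)} ∧ PartialHom2 G H k l (f k) (f l) := by
    refine exists_vertex_labelling
      (R := fun k l j j' => (z k, z l) ∈ θ {red j j'} ∧ PartialHom2 G H k l j j')
      (fun h => ⟨hθ.mem_conv_atom h.1, h.2.swap⟩)
      (fun k l hkl => hθ.exists_red_edge hxz hzy hkl) ?_
    rintro k l m i i' j j' - - ⟨hkl, -⟩ ⟨hkm, -⟩
    rcases eq_or_ne l m with rfl | hlm
    · exact (red_inj hkl hkm).1
    · obtain ⟨_, _, hlm, -⟩ := hθ.exists_red_edge hxz hzy hlm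
      exact (hθ.consistentTriple hkl hlm hkm).1
  have hjj' := red_inj (hf i i' hi).1 hred
  exact ⟨f, fun b k l hkl => ((hf k l hkl).2 b).1, hjj'⟩

end IsRepresentation

theorem not_representable_rbRA [Finite H.V] [PairHom G H]
    (h : ∃ (i i' : G.V) (j j' : H.V), i ≠ i' ∧ PartialHom2 G H i i' j j' ∧
      ¬ ∃ f : G.V → H.V, IsHom G H f ∧ f i = j ∧ f i' = j') :
    ¬ Representable (Set (RbAtom G.V H.V)) := by
  rw [representable_iff]
  rintro ⟨X, θ, hθ⟩
  obtain ⟨i, i', j, j', hi, hj, hf⟩ := h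
  obtain ⟨⟨n, n'⟩, hn⟩ := hθ.exists_mem (Set.singleton_ne_empty (red j j'))
  obtain ⟨x, hnx, hxn'⟩ :=
    hθ.exists_triangle hn (show ConsistentTriple G H (green i) (green i') _ from ⟨hi, hj⟩)
  obtain ⟨y, hny, hyn'⟩ :=
    hθ.exists_triangle hn (show ConsistentTriple G H yellow yellow _ from trivial)
  have hxn : (x, n) ∈ θ {green i} := hθ.mem_conv_atom hnx
  have hn'y : (n', y) ∈ θ {yellow} := hθ.mem_conv_atom hyn'
  have hz (k : G.V) : ∃ z, (k = i → z = n) ∧ (k = i' → z = n') ∧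
      (x, z) ∈ θ {green k} ∧ (z, y) ∈ θ {yellow} := by
    by_cases hki : k = i
    · subst hki
      exact ⟨n, fun _ => rfl, fun h => absurd h hi, hxn, hny⟩
    by_cases hki' : k = i'
    · subst hki'
      exact ⟨n', fun h => absurd h hki, fun _ => rfl, hxn', hn'y⟩
    have hxy : (x, y) ∈ θ (rbComp G H {green k} {yellow}) :=
      rbComp_green_yellow_eq i k ▸ hθ.mem_rbComp_iff.2 ⟨n, hxn, hny⟩
    obtain ⟨z, hz⟩ := hθ.mem_rbComp_iff.1 hxy
    exact ⟨z, fun h => absurd h hki, fun h => absurd h hki', hz⟩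
  choose z hzi hzi' hxz hzy using hz
  exact hf (hθ.exists_isHom hxz hzy hi (by rwa [hzi i rfl, hzi' i' rfl]))

end NotRepresentable

/-! ### Elementary equivalence -/

/-- `R` is the graph of a partial isomorphism between `G` and `H`, up to the truth values of the
predicates on the diagonal, which play no role in the rainbow construction. -/
structure IsPartialIso (G H : BinStruct σ) (R : G.V → H.V → Prop) : Prop where
  eq_iff {i i' : G.V} {k k' : H.V} : R i k → R i' k' → (i = i' ↔ k = k')
  rel_iff {i i' : G.V} {k k' : H.V} : R i k → R i' k' → i ≠ i' →
    ∀ b, (G.rel b i i' ↔ H.rel b k k')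

namespace IsPartialIso

variable {G H : BinStruct σ} {R : G.V → H.V → Prop} (hR : IsPartialIso G H R)

include hR

theorem symm : IsPartialIso H G (Function.swap R) where
  eq_iff h h' := (hR.eq_iff h h').symm
  rel_iff h h' hk b := (hR.rel_iff h h' (mt (hR.eq_iff h h').1 hk) b).symm

theorem partialHom2_iff (F : BinStruct σ) {i i' : G.V} {k k' : H.V} (h : R i k) (h' : R i' k')
    (hi : i ≠ i') (j j' : F.V) : PartialHom2 G F i i' j j' ↔ PartialHom2 H F k k' j j' := by
  simp only [PartialHom2, hR.rel_iff h h' hi, hR.rel_iff h' h hi.symm]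

end IsPartialIso

/-- A two-pebble back-and-forth system of partial isomorphisms between `G` and `H`. -/
structure IsBackAndForth (G H : BinStruct σ) (𝓡 : Set (G.V → H.V → Prop)) : Prop where
  nonempty : 𝓡.Nonempty
  isPartialIso : ∀ R ∈ 𝓡, IsPartialIso G H R
  exists_right : ∀ i, ∃ R ∈ 𝓡, ∃ k, R i k
  exists_left : ∀ k, ∃ R ∈ 𝓡, ∃ i, R i k
  forth : ∀ R ∈ 𝓡, ∀ i k, R i k → ∀ i', ∃ R' ∈ 𝓡, R' i k ∧ ∃ k', R' i' k'
  back : ∀ R ∈ 𝓡, ∀ i k, R i k → ∀ k', ∃ R' ∈ 𝓡, R' i k ∧ ∃ i', R' i' k'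

namespace IsBackAndForth

variable {G H : BinStruct σ} {𝓡 : Set (G.V → H.V → Prop)}

theorem symm (h : IsBackAndForth G H 𝓡) : IsBackAndForth H G (Function.swap ⁻¹' 𝓡) where
  nonempty :=
    let ⟨R, hR⟩ := h.nonempty
    ⟨Function.swap R, hR⟩
  isPartialIso _ hR := (h.isPartialIso _ hR).symm
  exists_right k :=
    let ⟨R, hR, hk⟩ := h.exists_left k
    ⟨Function.swap R, hR, hk⟩
  exists_left i :=
    let ⟨R, hR, hi⟩ := h.exists_right i
    ⟨Function.swap R, hR, hi⟩
  forth _ hR k i hik k' :=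
    let ⟨R', hR', hk'⟩ := h.back _ hR i k hik k'
    ⟨Function.swap R', hR', hk'⟩
  back _ hR k i hik i' :=
    let ⟨R', hR', hi'⟩ := h.forth _ hR i k hik i'
    ⟨Function.swap R', hR', hi'⟩

theorem pairHom (h : IsBackAndForth G H 𝓡) : PairHom G H where
  exists_partialHom2 i i' hi := by
    obtain ⟨R, hR, k, hik⟩ := h.exists_right i
    obtain ⟨R', hR', hik', k', hik''⟩ := h.forth R hR i k hik i'
    have hiso := h.isPartialIso R' hR'
    exact ⟨k, k', fun b => ⟨(hiso.rel_iff hik' hik'' hi b).1,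
      (hiso.rel_iff hik'' hik' hi.symm b).1⟩⟩

end IsBackAndForth

/-- The correspondence between atoms of `B_{G,F}` and of `B_{H,F}` that relates green atoms
through `R` and every other atom to itself. -/
inductive AtomRel {V W F : Type} (R : V → W → Prop) : RbAtom V F → RbAtom W F → Prop
  | id : AtomRel R .id .id
  | black : AtomRel R black black
  | white : AtomRel R white white
  | yellow : AtomRel R yellow yellow
  | green {i : V} {k : W} (h : R i k) : AtomRel R (green i) (green k)
  | red (j j' : F) : AtomRel R (red j j') (red j j')

namespace AtomRel

variable {V W F : Type} {R R' : V → W → Prop} {a : RbAtom V F} {a' : RbAtom W F}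

theorem symm (h : AtomRel R a a') : AtomRel (Function.swap R) a' a := by
  cases h <;> constructor
  assumption

theorem conv (h : AtomRel R a a') : AtomRel R a.conv a'.conv := by
  cases h <;> constructor
  assumption

theorem of_ne_green (h : AtomRel R a a') (ha : ∀ i, a ≠ RbAtom.green i) : AtomRel R' a a' := by
  cases h <;> first | exact absurd rfl (ha _) | constructor

theorem exists_of_ne_green (R : V → W → Prop) (ha : ∀ i, a ≠ RbAtom.green i) :
    ∃ a', AtomRel R a a' := by
  cases a <;> first | exact absurd rfl (ha _) | exact ⟨_, by constructor⟩

theorem eq_iff {G H : BinStruct σ} {R : G.V → H.V → Prop} (hR : IsPartialIso G H R)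
    {a b : RbAtom G.V F} {a' b' : RbAtom H.V F} (ha : AtomRel R a a') (hb : AtomRel R b b') :
    a = b ↔ a' = b' := by
  cases ha <;> cases hb <;> simp only [reduceCtorEq, red.injEq, green.injEq]
  exact hR.eq_iff ‹_› ‹_›

end AtomRel

theorem ConsistentTriple.map {G H F : BinStruct σ} {R : G.V → H.V → Prop}
    (hR : IsPartialIso G H R) {a b c : RbAtom G.V F.V} {a' b' c' : RbAtom H.V F.V}
    (h : ConsistentTriple G F a b c) (ha : AtomRel R a a') (hb : AtomRel R b b')
    (hc : AtomRel R c c') : ConsistentTriple H F a' b' c' := by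
  have map_green {i i' : G.V} {k k' : H.V} (hik : R i k) (hik' : R i' k') {j j' : F.V}
      (hred : i ≠ i' ∧ PartialHom2 G F i i' j j') : k ≠ k' ∧ PartialHom2 H F k k' j j' :=
    ⟨mt (hR.eq_iff hik hik').2 hred.1, (hR.partialHom2_iff F hik hik' hred.1 j j').1 hred.2⟩
  by_cases haid : a = .id
  · subst haid
    cases ha
    rw [ConsistentTriple.id_left] at h ⊢
    exact (hb.eq_iff hR hc).1 h
  by_cases hbid : b = .id
  · subst hbid
    cases hb
    rw [ConsistentTriple.id_right] at h ⊢
    exact (ha.eq_iff hR hc).1 h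
  by_cases hcid : c = .id
  · subst hcid
    cases hc
    rw [ConsistentTriple.to_id] at h ⊢
    exact (ha.eq_iff hR hb.conv).1 h
  cases ha <;> cases hb <;> cases hc <;>
    first
    | contradiction
    | exact h
    | exact map_green ‹_› ‹_› h
    | exact (map_green ‹_› ‹_› ⟨h.1.symm, h.2⟩).imp_left Ne.symm

section EltRel

variable {G H F : BinStruct σ} {𝓡 : Set (G.V → H.V → Prop)}

theorem IsBackAndForth.exists_atomRel (h : IsBackAndForth G H 𝓡) {R : G.V → H.V → Prop}
    (hR : R ∈ 𝓡) {c : RbAtom G.V F.V} {c' : RbAtom H.V F.V} (hc : AtomRel R c c')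
    (a : RbAtom G.V F.V) : ∃ R' ∈ 𝓡, AtomRel R' c c' ∧ ∃ a', AtomRel R' a a' := by
  by_cases ha : ∃ i, a = green i
  · obtain ⟨i, rfl⟩ := ha
    cases hc with
    | green hjk =>
      obtain ⟨R', hR', hjk', k', hik'⟩ := h.forth R hR _ _ hjk i
      exact ⟨R', hR', .green hjk', _, .green hik'⟩
    | _ =>
      obtain ⟨R', hR', k, hik⟩ := h.exists_right i
      exact ⟨R', hR', by constructor, _, .green hik⟩
  · exact ⟨R, hR, hc, AtomRel.exists_of_ne_green R (not_exists.1 ha)⟩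

theorem IsBackAndForth.exists_consistentTriple (h : IsBackAndForth G H 𝓡)
    {R : G.V → H.V → Prop} (hR : R ∈ 𝓡) {a b c : RbAtom G.V F.V} {c' : RbAtom H.V F.V}
    (habc : ConsistentTriple G F a b c) (hc : AtomRel R c c') :
    ∃ a' b', (∃ R ∈ 𝓡, AtomRel R a a') ∧ (∃ R ∈ 𝓡, AtomRel R b b') ∧
      ConsistentTriple H F a' b' c' := by
  obtain ⟨R₁, hR₁, hc₁, a', ha₁⟩ := h.exists_atomRel hR hc a
  by_cases hb : ∃ i, b = green i
  · by_cases ha : ∃ i, a = green i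
    · obtain ⟨R₂, hR₂, ha₂, b', hb₂⟩ := h.exists_atomRel hR₁ ha₁ b
      have hc₂ : AtomRel R₂ c c' := hc.of_ne_green <| by
        rintro i rfl
        obtain ⟨⟨_, rfl⟩, ⟨_, rfl⟩⟩ := And.intro ha hb
        exact habc
      exact ⟨a', b', ⟨R₂, hR₂, ha₂⟩, ⟨R₂, hR₂, hb₂⟩, habc.map (h.isPartialIso _ hR₂) ha₂ hb₂ hc₂⟩
    · obtain ⟨R₂, hR₂, hc₂, b', hb₂⟩ := h.exists_atomRel hR hc b
      have ha₂ : AtomRel R₂ a a' := ha₁.of_ne_green (not_exists.1 ha)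
      exact ⟨a', b', ⟨R₂, hR₂, ha₂⟩, ⟨R₂, hR₂, hb₂⟩, habc.map (h.isPartialIso _ hR₂) ha₂ hb₂ hc₂⟩
  · obtain ⟨b', hb₁⟩ := AtomRel.exists_of_ne_green R₁ (not_exists.1 hb)
    exact ⟨a', b', ⟨R₁, hR₁, ha₁⟩, ⟨R₁, hR₁, hb₁⟩, habc.map (h.isPartialIso _ hR₁) ha₁ hb₁ hc₁⟩

/-- Elements `x` of `B_{G,F}` and `y` of `B_{H,F}` are related when corresponding atoms lie in
`x` and in `y` at the same time; elements assigned to corresponding variables stay so related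
throughout the pebble game. -/
def EltRel (𝓡 : Set (G.V → H.V → Prop)) (x : Set (RbAtom G.V F.V)) (y : Set (RbAtom H.V F.V)) :
    Prop :=
  ∀ R ∈ 𝓡, ∀ a a', AtomRel R a a' → (a ∈ x ↔ a' ∈ y)

namespace EltRel

variable {x x' : Set (RbAtom G.V F.V)} {y y' : Set (RbAtom H.V F.V)}

theorem symm (h : EltRel 𝓡 x y) : EltRel (Function.swap ⁻¹' 𝓡) y x :=
  fun _ hR a' a ha => (h _ hR a a' ha.symm).symm

theorem subset_of_subset (h𝓡 : IsBackAndForth G H 𝓡) (h : EltRel 𝓡 x y) (h' : EltRel 𝓡 x' y')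
    (hy : y ⊆ y') : x ⊆ x' := by
  intro a hax
  obtain ⟨R, hR⟩ := h𝓡.nonempty
  obtain ⟨R', hR', -, a', ha⟩ := h𝓡.exists_atomRel hR (F := F) .id a
  exact (h' R' hR' a a' ha).2 (hy ((h R' hR' a a' ha).1 hax))

theorem eq_iff (h𝓡 : IsBackAndForth G H 𝓡) (h : EltRel 𝓡 x y) (h' : EltRel 𝓡 x' y') :
    x = x' ↔ y = y' where
  mp heq := (h.symm.subset_of_subset h𝓡.symm h'.symm heq.subset).antisymm
    (h'.symm.subset_of_subset h𝓡.symm h.symm heq.superset)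
  mpr heq := (h.subset_of_subset h𝓡 h' heq.subset).antisymm
    (h'.subset_of_subset h𝓡 h heq.superset)

theorem mem_rbComp_of_mem (h𝓡 : IsBackAndForth G H 𝓡) (h : EltRel 𝓡 x y) (h' : EltRel 𝓡 x' y')
    {R : G.V → H.V → Prop} (hR : R ∈ 𝓡) {c : RbAtom G.V F.V} {c' : RbAtom H.V F.V}
    (hcc' : AtomRel R c c') (hc : c ∈ rbComp G F x x') : c' ∈ rbComp H F y y' := by
  obtain ⟨a, hax, b, hbx', habc⟩ := mem_rbComp.1 hc
  obtain ⟨a', b', ⟨R₁, hR₁, ha⟩, ⟨R₂, hR₂, hb⟩, habc'⟩ :=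
    h𝓡.exists_consistentTriple hR habc hcc'
  exact mem_rbComp.2 ⟨a', (h R₁ hR₁ a a' ha).1 hax, b', (h' R₂ hR₂ b b' hb).1 hbx', habc'⟩

theorem rbComp (h𝓡 : IsBackAndForth G H 𝓡) (h : EltRel 𝓡 x y) (h' : EltRel 𝓡 x' y') :
    EltRel 𝓡 (rbComp G F x x') (rbComp H F y y') := fun _ hR _ _ hc =>
  ⟨h.mem_rbComp_of_mem h𝓡 h' hR hc, h.symm.mem_rbComp_of_mem h𝓡.symm h'.symm hR hc.symm⟩

theorem eval (h𝓡 : IsBackAndForth G H 𝓡) {c : ℕ} {v : Fin c → Set (RbAtom G.V F.V)}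
    {w : Fin c → Set (RbAtom H.V F.V)} (h : ∀ t, EltRel 𝓡 (v t) (w t)) (s : RATerm c) :
    EltRel 𝓡 (s.eval (rbOps G F) v) (s.eval (rbOps H F) w) := by
  induction s with
  | var t => exact h t
  | bot => exact fun _ _ _ _ _ => Iff.rfl
  | top => exact fun _ _ _ _ _ => Iff.rfl
  | one' => exact fun R hR a a' ha => ha.eq_iff (h𝓡.isPartialIso R hR) .id
  | sup _ _ hs ht => exact fun R hR a a' ha => or_congr (hs R hR a a' ha) (ht R hR a a' ha)
  | inf _ _ hs ht => exact fun R hR a a' ha => and_congr (hs R hR a a' ha) (ht R hR a a' ha)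
  | compl _ hs => exact fun R hR a a' ha => not_congr (hs R hR a a' ha)
  | comp _ _ hs ht => exact hs.rbComp h𝓡 ht
  | conv _ hs => exact fun R hR a a' ha => hs R hR a.conv a'.conv ha.conv

end EltRel

end EltRel

/-! ### The colouring game -/

theorem ColWin.swap {G H : BinStruct σ} {n : ℕ} {g : Fin n → Set G.V} {h : Fin n → Set H.V}
    (hwin : ColWin H G n h g) : ColWin G H n g h := by
  rcases hwin with ⟨π, hπ⟩ | ⟨π, π', b, hπ⟩
  · exact .inl ⟨π, hπ.symm⟩
  · exact .inr ⟨π, π', b, hπ.symm⟩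

namespace IsColInvariant

variable {G H : BinStruct σ} {n : ℕ} {Inv : (Fin n → Set G.V) → (Fin n → Set H.V) → Prop}
  (hInv : IsColInvariant G H n Inv) {g : Fin n → Set G.V} {h : Fin n → Set H.V} (hgh : Inv g h)

include hInv

theorem symm : IsColInvariant H G n (Function.swap Inv) :=
  let ⟨hinit, hwin, hforth, hback⟩ := hInv
  ⟨hinit, fun h g hgh => mt ColWin.swap (hwin g h hgh), fun h g => hback g h,
    fun h g => hforth g h⟩

include hgh

theorem exists_same_palette (i : G.V) : ∃ k, ∀ s, i ∈ g s ↔ k ∈ h s := by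
  by_contra! hne
  have hempty : PaletteSet h {s | i ∈ g s} = ∅ := by
    refine Set.eq_empty_of_forall_notMem fun k hk => ?_
    obtain ⟨s, hs⟩ := hne k
    grind [hk s]
  have hmem : i ∈ PaletteSet g {s | i ∈ g s} := fun _ => Iff.rfl
  exact hInv.2.1 g h hgh (.inl ⟨_, .inr ⟨hempty, Set.nonempty_iff_ne_empty.1 ⟨i, hmem⟩⟩⟩)

theorem exists_rel_of_rel {b : σ} {i i' : G.V} (hb : G.rel b i i') :
    ∃ k k', (∀ s, i ∈ g s ↔ k ∈ h s) ∧ (∀ s, i' ∈ g s ↔ k' ∈ h s) ∧ H.rel b k k' := by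
  by_contra! hne
  have hempty : (PaletteSet h {s | i ∈ g s} ×ˢ PaletteSet h {s | i' ∈ g s}) ∩
      {q | H.rel b q.1 q.2} = ∅ :=
    Set.eq_empty_of_forall_notMem fun q ⟨⟨hk, hk'⟩, hrel⟩ =>
      hne q.1 q.2 (fun s => (hk s).symm) (fun s => (hk' s).symm) hrel
  have hmem : (i, i') ∈ (PaletteSet g {s | i ∈ g s} ×ˢ PaletteSet g {s | i' ∈ g s}) ∩
      {q | G.rel b q.1 q.2} := ⟨⟨fun _ => Iff.rfl, fun _ => Iff.rfl⟩, hb⟩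
  exact hInv.2.1 g h hgh
    (.inr ⟨_, _, b, .inr ⟨hempty, Set.nonempty_iff_ne_empty.1 ⟨(i, i'), hmem⟩⟩⟩)

theorem mem_iff_mem_of_singleton {r : Fin n} {i : G.V} {k : H.V} (hi : g r = {i})
    (hk : h r = {k}) (s : Fin n) : i ∈ g s ↔ k ∈ h s := by
  obtain ⟨k', hk'⟩ := hInv.exists_same_palette hgh i
  have heq : k' = k := by simpa [hi, hk] using hk' r
  exact heq ▸ hk' s

/-- A second vertex of colour `r` could be told apart from the first by recolouring `q`. -/
theorem exists_eq_singleton {q r : Fin n} (hqr : q ≠ r) {i : G.V} (hi : g r = {i}) :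
    ∃ k, h r = {k} := by
  obtain ⟨k, hk⟩ := hInv.exists_same_palette hgh i
  have hkr : k ∈ h r := by simpa [hi] using hk r
  obtain ⟨S, hS⟩ := hInv.2.2.2 g h hgh q {k}
  have mem_S_iff {k' : H.V} (hk' : k' ∈ h r) : i ∈ S ↔ k' = k := by
    obtain ⟨i', hi'⟩ := hInv.symm.exists_same_palette hS k'
    have heq : i' = i := by simpa [hqr.symm, hi, hk'] using hi' r
    subst heq
    simpa using (hi' q).symm
  exact ⟨k, Set.eq_singleton_iff_unique_mem.2
    ⟨hkr, fun k' hk' => (mem_S_iff hk').1 ((mem_S_iff hkr).2 rfl)⟩⟩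

theorem rel_of_rel {r r' : Fin n} {i i' : G.V} {k k' : H.V} (hi : g r = {i}) (hk : h r = {k})
    (hi' : g r' = {i'}) (hk' : h r' = {k'}) {b : σ} (hb : G.rel b i i') : H.rel b k k' := by
  obtain ⟨l, l', hl, hl', hrel⟩ := hInv.exists_rel_of_rel hgh hb
  have hlk : l = k := by simpa [hi, hk] using hl r
  have hlk' : l' = k' := by simpa [hi', hk'] using hl' r'
  rwa [← hlk, ← hlk']

end IsColInvariant

/-- Relates two vertices that are named by the same tag: they form the singleton colour classes of
a colour in `T`. -/
def TagRel {G H : BinStruct σ} {n : ℕ} (T : Set (Fin n)) (g : Fin n → Set G.V)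
    (h : Fin n → Set H.V) (i : G.V) (k : H.V) : Prop :=
  ∃ r ∈ T, g r = {i} ∧ h r = {k}

/-- The tag relations of those safe positions of the colouring game that differ from `(g₀, h₀)` at
most in the tag colours. -/
def tagSystem {G H : BinStruct σ} {n : ℕ} (Inv : (Fin n → Set G.V) → (Fin n → Set H.V) → Prop)
    (T : Set (Fin n)) (g₀ : Fin n → Set G.V) (h₀ : Fin n → Set H.V) : Set (G.V → H.V → Prop) :=
  {R | ∃ g h, Inv g h ∧ Set.EqOn g g₀ Tᶜ ∧ Set.EqOn h h₀ Tᶜ ∧ TagRel T g h = R}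

section TagSystem

variable {G H : BinStruct σ} {n : ℕ} {Inv : (Fin n → Set G.V) → (Fin n → Set H.V) → Prop}
  {T : Set (Fin n)} {g g₀ : Fin n → Set G.V} {h h₀ : Fin n → Set H.V}

theorem swap_tagRel : Function.swap (TagRel T g h) = TagRel T h g := by
  ext k i
  simp only [Function.swap, TagRel, and_comm]

theorem preimage_swap_tagSystem :
    Function.swap ⁻¹' tagSystem Inv T g₀ h₀ = tagSystem (Function.swap Inv) T h₀ g₀ := by
  ext R
  constructor
  · rintro ⟨g, h, hgh, hg, hh, hR⟩
    exact ⟨h, g, hgh, hh, hg, by rw [← swap_tagRel, hR]⟩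
  · rintro ⟨h, g, hgh, hh, hg, rfl⟩
    exact ⟨g, h, hgh, hg, hh, swap_tagRel.symm⟩

theorem IsColInvariant.isPartialIso_tagRel (hInv : IsColInvariant G H n Inv) (hgh : Inv g h) :
    IsPartialIso G H (TagRel T g h) where
  eq_iff := by
    rintro i i' k k' ⟨r, -, hi, hk⟩ ⟨r', -, hi', hk'⟩
    simpa [hi', hk'] using hInv.mem_iff_mem_of_singleton hgh hi hk r'
  rel_iff := by
    rintro i i' k k' ⟨r, -, hi, hk⟩ ⟨r', -, hi', hk'⟩ - b
    exact ⟨hInv.rel_of_rel hgh hi hk hi' hk', hInv.symm.rel_of_rel hgh hk hi hk' hi'⟩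

theorem IsColInvariant.exists_tag (hInv : IsColInvariant G H n Inv) (hgh : Inv g h)
    (hg : Set.EqOn g g₀ Tᶜ) (hh : Set.EqOn h h₀ Tᶜ) {q r : Fin n} (hq : q ∈ T) (hqr : r ≠ q)
    (i : G.V) : ∃ R ∈ tagSystem Inv T g₀ h₀,
      (∀ i' k', r ∈ T → g r = {i'} → h r = {k'} → R i' k') ∧ ∃ k, R i k := by
  obtain ⟨S, hS⟩ := hInv.2.2.1 g h hgh q {i}
  obtain ⟨k, hk⟩ := hInv.exists_eq_singleton hS hqr (Function.update_self q {i} g)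
  have hne {s : Fin n} (hs : s ∈ Tᶜ) : s ≠ q := fun h => hs (h ▸ hq)
  refine ⟨_, ⟨_, _, hS, fun s hs => ?_, fun s hs => ?_, rfl⟩, fun i' k' hr hi' hk' => ?_,
    k, q, hq, Function.update_self q {i} g, hk⟩
  · rw [Function.update_of_ne (hne hs), hg hs]
  · rw [Function.update_of_ne (hne hs), hh hs]
  · exact ⟨r, hr, by rwa [Function.update_of_ne hqr], by rwa [Function.update_of_ne hqr]⟩

theorem IsColInvariant.tagSystem_exists_right (hInv : IsColInvariant G H n Inv)
    (hT : T.Nontrivial) (hgh : Inv g₀ h₀) (i : G.V) :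
    ∃ R ∈ tagSystem Inv T g₀ h₀, ∃ k, R i k := by
  obtain ⟨q, hq, r, -, hqr⟩ := hT
  obtain ⟨R, hR, -, hk⟩ := hInv.exists_tag hgh (Set.eqOn_refl _ _) (Set.eqOn_refl _ _) hq hqr.symm i
  exact ⟨R, hR, hk⟩

theorem IsColInvariant.tagSystem_forth (hInv : IsColInvariant G H n Inv) (hT : T.Nontrivial)
    {R : G.V → H.V → Prop} (hR : R ∈ tagSystem Inv T g₀ h₀) {i : G.V} {k : H.V} (hik : R i k)
    (i' : G.V) : ∃ R' ∈ tagSystem Inv T g₀ h₀, R' i k ∧ ∃ k', R' i' k' := by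
  obtain ⟨g, h, hgh, hg, hh, rfl⟩ := hR
  obtain ⟨r, hr, hi, hk⟩ := hik
  obtain ⟨q, hq, hqr⟩ := hT.exists_ne r
  obtain ⟨R', hR', hkeep, hk'⟩ := hInv.exists_tag hgh hg hh hq hqr.symm i'
  exact ⟨R', hR', hkeep i k hr hi hk, hk'⟩

/-- One tag remembers a pair of vertices while the other one looks for the next pair. -/
theorem IsColInvariant.isBackAndForth_tagSystem (hInv : IsColInvariant G H n Inv)
    (hT : T.Nontrivial) (hgh : Inv g₀ h₀) : IsBackAndForth G H (tagSystem Inv T g₀ h₀) where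
  nonempty := ⟨_, g₀, h₀, hgh, Set.eqOn_refl _ _, Set.eqOn_refl _ _, rfl⟩
  isPartialIso := by
    rintro _ ⟨g, h, hgh, -, -, rfl⟩
    exact hInv.isPartialIso_tagRel hgh
  exists_right := hInv.tagSystem_exists_right hT hgh
  exists_left k := by
    obtain ⟨R, hR, i, hik⟩ := hInv.symm.tagSystem_exists_right hT hgh k
    rw [← preimage_swap_tagSystem] at hR
    exact ⟨_, hR, i, hik⟩
  forth _ hR _ _ hik := hInv.tagSystem_forth hT hR hik
  back R hR i k hik k' := by
    have hR' : Function.swap R ∈ tagSystem (Function.swap Inv) T h₀ g₀ := by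
      rwa [← preimage_swap_tagSystem]
    obtain ⟨R', hR', hik', hi'⟩ := hInv.symm.tagSystem_forth hT hR' hik k'
    rw [← preimage_swap_tagSystem] at hR'
    exact ⟨_, hR', hik', hi'⟩

end TagSystem

section MatchPos

variable {G H F : BinStruct σ} {c n : ℕ} {Inv : (Fin n → Set G.V) → (Fin n → Set H.V) → Prop}
  {ι : Fin c ↪ Fin n} {v : Fin c → Set (RbAtom G.V F.V)} {w : Fin c → Set (RbAtom H.V F.V)}

/-- Assignments `v` into `B_{G,F}` and `w` into `B_{H,F}` match when they agree off the green atoms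
and their green parts are the colour classes, under the colours in the range of `ι`, of a safe
position of the colouring game. The colours outside the range of `ι` are free for use as tags. -/
def MatchPos (Inv : (Fin n → Set G.V) → (Fin n → Set H.V) → Prop) (ι : Fin c ↪ Fin n)
    (v : Fin c → Set (RbAtom G.V F.V)) (w : Fin c → Set (RbAtom H.V F.V)) : Prop :=
  ∃ g h, Inv g h ∧ (∀ t, g (ι t) = greenPart (v t)) ∧ (∀ t, h (ι t) = greenPart (w t)) ∧
    ∀ t a a', AtomRel ⊥ a a' → (a ∈ v t ↔ a' ∈ w t)

namespace MatchPos

theorem symm (hm : MatchPos Inv ι v w) : MatchPos (Function.swap Inv) ι w v :=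
  let ⟨g, h, hgh, hv, hw, hrest⟩ := hm
  ⟨h, g, hgh, hw, hv, fun t a a' ha => (hrest t a' a ha.symm).symm⟩

theorem exists_update (hInv : IsColInvariant G H n Inv) (hm : MatchPos Inv ι v w) (t : Fin c)
    (x : Set (RbAtom G.V F.V)) :
    ∃ y, MatchPos Inv ι (Function.update v t x) (Function.update w t y) := by
  obtain ⟨g, h, hgh, hv, hw, hrest⟩ := hm
  obtain ⟨S, hS⟩ := hInv.2.2.1 g h hgh (ι t) (greenPart x)
  refine ⟨mirrorElt x S, _, _, hS, fun s => ?_, fun s => ?_, fun s a a' ha => ?_⟩ <;>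
    rcases eq_or_ne s t with rfl | hst
  · simp only [Function.update_self]
  · simp only [Function.update_of_ne hst, Function.update_of_ne (ι.injective.ne hst), hv]
  · simp only [Function.update_self]
    rfl
  · simp only [Function.update_of_ne hst, Function.update_of_ne (ι.injective.ne hst), hw]
  · simp only [Function.update_self]
    cases ha <;> first | contradiction | exact Iff.rfl
  · simp only [Function.update_of_ne hst]
    exact hrest s a a' ha

theorem exists_eltRel (hInv : IsColInvariant G H n Inv) (hι : (Set.range ι)ᶜ.Nontrivial)
    (hm : MatchPos Inv ι v w) : ∃ 𝓡, IsBackAndForth G H 𝓡 ∧ ∀ t, EltRel 𝓡 (v t) (w t) := by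
  obtain ⟨g₀, h₀, hgh₀, hv, hw, hrest⟩ := hm
  refine ⟨_, hInv.isBackAndForth_tagSystem hι hgh₀, ?_⟩
  rintro t _ ⟨g, h, hgh, hg, hh, rfl⟩ a a' ha
  have hmem : ι t ∈ (Set.range ι)ᶜᶜ := by simp
  cases ha with
  | @green i k hik =>
    obtain ⟨r, -, hi, hk⟩ := hik
    change i ∈ greenPart (v t) ↔ k ∈ greenPart (w t)
    rw [← hv, ← hw, ← hg hmem, ← hh hmem]
    exact hInv.mem_iff_mem_of_singleton hgh hi hk (ι t)
  | _ => exact hrest t _ _ (by constructor)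

theorem sat_iff (hInv : IsColInvariant G H n Inv) (hι : (Set.range ι)ᶜ.Nontrivial)
    (φ : RAFormula c) (hm : MatchPos Inv ι v w) :
    φ.Sat (rbOps G F) v ↔ φ.Sat (rbOps H F) w := by
  induction φ generalizing v w with
  | eq s t =>
    obtain ⟨𝓡, h𝓡, hvw⟩ := hm.exists_eltRel hInv hι
    exact EltRel.eq_iff h𝓡 (.eval h𝓡 hvw s) (.eval h𝓡 hvw t)
  | not φ ih => exact not_congr (ih hm)
  | and φ ψ ihφ ihψ => exact and_congr (ihφ hm) (ihψ hm)
  | ex t φ ih =>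
    constructor
    · rintro ⟨x, hx⟩
      obtain ⟨y, hxy⟩ := hm.exists_update hInv t x
      exact ⟨y, (ih hxy).1 hx⟩
    · rintro ⟨y, hy⟩
      obtain ⟨x, hxy⟩ := hm.symm.exists_update hInv.symm t y
      exact ⟨x, (ih hxy.symm).2 hy⟩

end MatchPos

theorem IsColInvariant.sat_iff (hInv : IsColInvariant G H n Inv)
    (hι : (Set.range ι)ᶜ.Nontrivial) (φ : RAFormula c) :
    φ.Sat (rbOps G F) (fun _ => ∅) ↔ φ.Sat (rbOps H F) (fun _ => ∅) :=
  MatchPos.sat_iff hInv hι φ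
    ⟨_, _, hInv.1, fun _ => rfl, fun _ => rfl, fun _ _ _ _ => Iff.rfl⟩

end MatchPos

/-! ### Rainbow networks -/

/-- A consistent atomic network over `B_{G,H}`: a labelling of the pairs of nodes by atoms in which
only loops carry the identity and all triangles are consistent. -/
structure AtomicNetwork (G H : BinStruct σ) {X : Type} (L : X → X → RbAtom G.V H.V) : Prop where
  eq_id_iff (x y : X) : L x y = .id ↔ x = y
  conv_eq (x y : X) : L y x = (L x y).conv
  triangle (x y z : X) : ConsistentTriple G H (L x y) (L y z) (L x z)

/-- `f` governs the cone over `(u, v)`, which consists of the nodes joined to `u` by a green and to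
`v` by a yellow edge: the red edges of the cone are the `f`-images of pairs of green subscripts. -/
structure ConeHom (G H : BinStruct σ) {X : Type} (L : X → X → RbAtom G.V H.V) (u v : X)
    (f : G.V → H.V) : Prop where
  isHom : IsHom G H f
  eq_red {n n' : X} {i i' : G.V} : n ≠ n' → L u n = green i → L v n = yellow →
    L u n' = green i' → L v n' = yellow → L n n' = red (f i) (f i')

/-- Consistent atomic networks all of whose cones are governed by homomorphisms; this is what keeps
the step-by-step construction of a representation alive. -/
structure RainbowNetwork (G H : BinStruct σ) {X : Type} (L : X → X → RbAtom G.V H.V) : Prop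
    extends AtomicNetwork G H L where
  exists_coneHom (u v : X) : ∃ f, ConeHom G H L u v f

/-- There are homomorphisms `G → H`, and every size-two partial homomorphism extends to one. -/
structure TwoPointExtension (G H : BinStruct σ) : Prop where
  exists_isHom : ∃ f, IsHom G H f
  extend (i i' : G.V) (j j' : H.V) : i ≠ i' → PartialHom2 G H i i' j j' →
    ∃ f, IsHom G H f ∧ f i = j ∧ f i' = j'

section Networks

variable {G H : BinStruct σ} {X Y : Type} {L : X → X → RbAtom G.V H.V}

namespace AtomicNetwork

variable (hL : AtomicNetwork G H L)

include hL

theorem self (x : X) : L x x = .id := (hL.eq_id_iff x x).2 rfl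

theorem ne_id {x y : X} (h : x ≠ y) : L x y ≠ .id := mt (hL.eq_id_iff x y).1 h

theorem comap {f : Y → X} (hf : Function.Injective f) :
    AtomicNetwork G H fun x y => L (f x) (f y) where
  eq_id_iff _ _ := (hL.eq_id_iff _ _).trans hf.eq_iff
  conv_eq _ _ := hL.conv_eq _ _
  triangle _ _ _ := hL.triangle _ _ _

theorem ne_of_mem_cone {u v n n' : X} {i i' : G.V} (hn : n ≠ n') (hun : L u n = green i)
    (hvn : L v n = yellow) (hun' : L u n' = green i') (hvn' : L v n' = yellow) : i ≠ i' := by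
  have hid := hL.ne_id hn
  have hgreen := hL.triangle n u n'
  have hyellow := hL.triangle n v n'
  rw [hL.conv_eq u n, hun, hun'] at hgreen
  rw [hL.conv_eq v n, hvn, hvn'] at hyellow
  rintro rfl
  generalize L n n' = a at *
  cases a <;> simp_all [ConsistentTriple, conv]

theorem exists_eq_red_of_mem_cone {u v n n' : X} {i i' : G.V} (hn : n ≠ n')
    (hun : L u n = green i) (hvn : L v n = yellow) (hun' : L u n' = green i')
    (hvn' : L v n' = yellow) : ∃ j j', L n n' = red j j' ∧ PartialHom2 G H i i' j j' := by
  have hgreen := hL.triangle n u n'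
  have hyellow := hL.triangle n v n'
  rw [hL.conv_eq u n, hun, hun'] at hgreen
  rw [hL.conv_eq v n, hvn, hvn'] at hyellow
  exact hgreen.exists_eq_red (hL.ne_of_mem_cone hn hun hvn hun' hvn') hyellow

theorem exists_coneHom_of_forall_mem_pair (hGH : TwoPointExtension G H) {u v x y : X}
    (hcone : ∀ n i, L u n = green i → L v n = yellow → n = x ∨ n = y) :
    ∃ f, ConeHom G H L u v f := by
  by_cases hxy : ∃ i i', x ≠ y ∧ L u x = green i ∧ L v x = yellow ∧ L u y = green i' ∧
      L v y = yellow
  · obtain ⟨i, i', hne, hux, hvx, huy, hvy⟩ := hxy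
    obtain ⟨j, j', hred, hj⟩ := hL.exists_eq_red_of_mem_cone hne hux hvx huy hvy
    obtain ⟨f, hf, rfl, rfl⟩ := hGH.extend i i' j j' (hL.ne_of_mem_cone hne hux hvx huy hvy) hj
    have hred' : L y x = red (f i') (f i) := by rw [hL.conv_eq x y, hred, conv]
    refine ⟨f, hf, fun {n n' k k'} hn hun hvn hun' hvn' => ?_⟩
    rcases hcone n k hun hvn with rfl | rfl <;> rcases hcone n' k' hun' hvn' with rfl | rfl <;>
      simp_all
  · obtain ⟨f, hf⟩ := hGH.exists_isHom
    refine ⟨f, hf, fun {n n' k k'} hn hun hvn hun' hvn' => absurd ?_ hxy⟩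
    rcases hcone n k hun hvn with rfl | rfl <;> rcases hcone n' k' hun' hvn' with rfl | rfl
    · exact absurd rfl hn
    · exact ⟨k, k', hn, hun, hvn, hun', hvn'⟩
    · exact ⟨k', k, hn.symm, hun', hvn', hun, hvn⟩
    · exact absurd rfl hn

end AtomicNetwork

theorem ConeHom.comap {f : Y → X} (hf : Function.Injective f) {u v : Y} {φ : G.V → H.V}
    (h : ConeHom G H L (f u) (f v) φ) : ConeHom G H (fun x y => L (f x) (f y)) u v φ where
  isHom := h.isHom
  eq_red hn := h.eq_red (hf.ne hn)

theorem RainbowNetwork.comap (hL : RainbowNetwork G H L) {f : Y → X}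
    (hf : Function.Injective f) : RainbowNetwork G H fun x y => L (f x) (f y) where
  toAtomicNetwork := hL.toAtomicNetwork.comap hf
  exists_coneHom u v := (hL.exists_coneHom (f u) (f v)).imp fun _ h => h.comap hf

theorem rainbowNetwork_const_id [Subsingleton X] (hGH : TwoPointExtension G H) :
    RainbowNetwork G H fun _ _ : X => .id where
  eq_id_iff x y := iff_of_true rfl (Subsingleton.elim x y)
  conv_eq _ _ := rfl
  triangle _ _ _ := ConsistentTriple.id_left.2 rfl
  exists_coneHom _ _ := hGH.exists_isHom.imp fun _ hf => ⟨hf, fun _ h => nomatch h⟩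

/-! ### One-point extensions of networks -/

/-- Adjoins the node `none`, with label `M n` from `none` to the old node `n`. -/
def extendLabel (L : X → X → RbAtom G.V H.V) (M : X → RbAtom G.V H.V) :
    Option X → Option X → RbAtom G.V H.V
  | some n, some n' => L n n'
  | none, some n => M n
  | some n, none => (M n).conv
  | none, none => .id

variable {M : X → RbAtom G.V H.V}

theorem AtomicNetwork.option (hL : AtomicNetwork G H L) (hid : ∀ n, M n ≠ .id)
    (htri : ∀ n n', ConsistentTriple G H (M n) (L n n') (M n')) :
    AtomicNetwork G H (extendLabel L M) where
  eq_id_iff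
    | some n, some n' => by simpa [extendLabel] using hL.eq_id_iff n n'
    | none, some n => by simpa [extendLabel] using hid n
    | some n, none => by simpa [extendLabel] using hid n
    | none, none => iff_of_true rfl rfl
  conv_eq
    | some n, some n' => hL.conv_eq n n'
    | none, some _ => rfl
    | some n, none => ((M n).conv_conv).symm
    | none, none => rfl
  triangle
    | some n, some n', some n'' => hL.triangle n n' n''
    | none, some n, some n' => htri n n'
    | some n, none, some n' => (htri n n').rotate
    | some n, some n', none => by
      simpa only [extendLabel, hL.conv_eq n' n] using (htri n' n).converse
    | none, none, some n => ConsistentTriple.id_left.2 rfl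
    | none, some n, none => ConsistentTriple.to_id.2 ((M n).conv_conv).symm
    | some n, none, none => ConsistentTriple.id_right.2 rfl
    | none, none, none => ConsistentTriple.id_left.2 rfl

/-- A requirement that the network does not yet meet: the triangle on `x`, `y` and a further node
with label `p` to `x` and `q` to `y` is consistent, but there is no such node. -/
structure IsDefect (G H : BinStruct σ) (L : X → X → RbAtom G.V H.V) (x y : X)
    (p q : RbAtom G.V H.V) : Prop where
  triangle : ConsistentTriple G H p (L x y) q
  no_witness (n : X) : ¬ (L n x = p ∧ L n y = q)

/-- The label `p` to `x` and `q` to `y` of a new node is continued to the other nodes `n`. Two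
nodes of the cone over `(x, y)` are joined by the red edge which `f` prescribes. Otherwise black is
safe if the node forms two green edges with `x` or with `y`, and white is safe if it does not. -/
def newLabel (L : X → X → RbAtom G.V H.V) (f : G.V → H.V) (x y : X) (p q : RbAtom G.V H.V)
    (n : X) : RbAtom G.V H.V :=
  match p, q, L x n, L y n with
  | p, _, .id, _ => p
  | _, q, _, .id => q
  | green i, yellow, green i', yellow => red (f i) (f i')
  | green _, _, green _, _ => black
  | _, green _, _, green _ => black
  | _, _, _, _ => white

namespace IsDefect

variable {x y n n' : X} {p q : RbAtom G.V H.V} {f : G.V → H.V}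

theorem left_ne_id (h : IsDefect G H L x y p q) (hL : AtomicNetwork G H L) : p ≠ .id := by
  rintro rfl
  exact h.no_witness x ⟨hL.self x, ConsistentTriple.id_left.1 h.triangle⟩

theorem right_ne_id (h : IsDefect G H L x y p q) (hL : AtomicNetwork G H L) : q ≠ .id := by
  rintro rfl
  exact h.no_witness y ⟨(hL.conv_eq x y).trans (ConsistentTriple.to_id.1 h.triangle).symm,
    hL.self y⟩

theorem swap (h : IsDefect G H L x y p q) (hL : AtomicNetwork G H L) :
    IsDefect G H L y x q p where
  triangle := hL.conv_eq x y ▸ h.triangle.flip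
  no_witness n hn := h.no_witness n hn.symm

theorem newLabel_left (hL : AtomicNetwork G H L) : newLabel L f x y p q x = p := by
  simp [newLabel, hL.self]

theorem newLabel_right (h : IsDefect G H L x y p q) (hL : AtomicNetwork G H L) :
    newLabel L f x y p q y = q := by
  rcases eq_or_ne x y with rfl | hxy
  · rw [newLabel_left hL, ← ConsistentTriple.id_right (G := G) (H := H), ← hL.self x]
    exact h.triangle
  · have hid : L x y ≠ .id := hL.ne_id hxy
    simp only [newLabel, hL.self]

theorem newLabel_cases (hL : AtomicNetwork G H L) (hpq : ¬ (p = yellow ∧ ∃ i, q = green i))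
    (hx : x ≠ n) (hy : y ≠ n) :
    (∃ i i', p = green i ∧ q = yellow ∧ L x n = green i' ∧ L y n = yellow ∧
      newLabel L f x y p q n = red (f i) (f i')) ∨
    (newLabel L f x y p q n = black ∧ ¬ (p = yellow ∧ L x n = yellow) ∧
      ¬ (q = yellow ∧ L y n = yellow)) ∨
    (newLabel L f x y p q n = white ∧ (¬ ∃ i i', p = green i ∧ L x n = green i') ∧
      ¬ ∃ i i', q = green i ∧ L y n = green i') := by
  have hx' := hL.ne_id hx
  have hy' := hL.ne_id hy
  unfold newLabel
  split <;> simp_all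

theorem newLabel_ne_id (h : IsDefect G H L x y p q) (hL : AtomicNetwork G H L)
    (hpq : ¬ (p = yellow ∧ ∃ i, q = green i)) (n : X) : newLabel L f x y p q n ≠ .id := by
  rcases eq_or_ne x n with rfl | hx
  · simpa only [newLabel_left hL] using h.left_ne_id hL
  rcases eq_or_ne y n with rfl | hy
  · simpa only [h.newLabel_right hL] using h.right_ne_id hL
  rcases newLabel_cases (f := f) hL hpq hx hy with ⟨_, _, _, _, _, _, hM⟩ | ⟨hM, _⟩ | ⟨hM, _⟩ <;>
    simp [hM]

theorem triangle_left (h : IsDefect G H L x y p q) (hL : AtomicNetwork G H L) (hf : IsHom G H f)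
    (hpq : ¬ (p = yellow ∧ ∃ i, q = green i)) (n : X) :
    ConsistentTriple G H (newLabel L f x y p q n) (L n x) p := by
  rw [hL.conv_eq x n]
  rcases eq_or_ne x n with rfl | hx
  · rw [hL.self, newLabel_left hL]
    exact ConsistentTriple.id_right.2 rfl
  rcases eq_or_ne y n with rfl | hy
  · rw [h.newLabel_right hL]
    exact h.triangle.flip
  rcases newLabel_cases (f := f) hL hpq hx hy with
    ⟨i, i', rfl, rfl, hxn, hyn, hM⟩ | ⟨hM, hyellow, -⟩ | ⟨hM, hgreen, -⟩ <;> rw [hM]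
  · have hne : i ≠ i' := by
      rintro rfl
      exact h.no_witness n ⟨hL.conv_eq x n ▸ conv_eq_green.2 hxn,
        hL.conv_eq y n ▸ conv_eq_yellow.2 hyn⟩
    rw [hxn]
    exact ⟨hne.symm, hf.partialHom2 hne⟩
  · exact (ConsistentTriple.black_right (h.left_ne_id hL) (hL.ne_id hx) hyellow).flip
  · exact (ConsistentTriple.white_right (h.left_ne_id hL) (hL.ne_id hx) hgreen).flip

theorem triangle_right (h : IsDefect G H L x y p q) (hL : AtomicNetwork G H L)
    (hpq : ¬ (p = yellow ∧ ∃ i, q = green i)) (n : X) :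
    ConsistentTriple G H (newLabel L f x y p q n) (L n y) q := by
  rcases eq_or_ne x n with rfl | hx
  · rw [newLabel_left hL]
    exact h.triangle
  rw [hL.conv_eq y n]
  rcases eq_or_ne y n with rfl | hy
  · rw [hL.self, h.newLabel_right hL]
    exact ConsistentTriple.id_right.2 rfl
  rcases newLabel_cases (f := f) hL hpq hx hy with
    ⟨i, i', rfl, rfl, -, hyn, hM⟩ | ⟨hM, -, hyellow⟩ | ⟨hM, -, hgreen⟩ <;> rw [hM]
  · rw [hyn]
    trivial
  · exact (ConsistentTriple.black_right (h.right_ne_id hL) (hL.ne_id hy) hyellow).flip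
  · exact (ConsistentTriple.white_right (h.right_ne_id hL) (hL.ne_id hy) hgreen).flip

theorem triangle_of_ne (hL : AtomicNetwork G H L) (hf : ConeHom G H L x y f)
    (hpq : ¬ (p = yellow ∧ ∃ i, q = green i)) (hn : n ≠ n') (hx : x ≠ n) (hy : y ≠ n)
    (hx' : x ≠ n') (hy' : y ≠ n') :
    ConsistentTriple G H (newLabel L f x y p q n) (L n n') (newLabel L f x y p q n') := by
  have hid := hL.ne_id hn
  rcases newLabel_cases (f := f) hL hpq hx hy with
    ⟨i, i', rfl, rfl, hxn, hyn, hM⟩ | ⟨hM, -⟩ | ⟨hM, -⟩ <;>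
  rcases newLabel_cases (f := f) hL hpq hx' hy' with
    ⟨k, k', hp, -, hxn', hyn', hM'⟩ | ⟨hM', -⟩ | ⟨hM', -⟩ <;>
  rw [hM, hM']
  · obtain rfl : i = k := RbAtom.green.inj hp
    rw [hf.eq_red hn hxn hyn hxn' hyn']
    exact ⟨rfl, rfl, rfl⟩
  all_goals
    generalize L n n' = a at *
    cases a <;> simp_all [ConsistentTriple]

theorem triangle_newLabel (h : IsDefect G H L x y p q) (hL : AtomicNetwork G H L)
    (hf : ConeHom G H L x y f) (hpq : ¬ (p = yellow ∧ ∃ i, q = green i)) (n n' : X) :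
    ConsistentTriple G H (newLabel L f x y p q n) (L n n') (newLabel L f x y p q n') := by
  have hMx : newLabel L f x y p q x = p := newLabel_left hL
  have hMy : newLabel L f x y p q y = q := h.newLabel_right hL
  rcases eq_or_ne n n' with rfl | hn
  · rw [hL.self]
    exact ConsistentTriple.id_right.2 rfl
  rcases eq_or_ne x n' with rfl | hx'
  · exact hMx.symm ▸ h.triangle_left hL hf.isHom hpq n
  rcases eq_or_ne y n' with rfl | hy'
  · exact hMy.symm ▸ h.triangle_right hL hpq n
  rcases eq_or_ne x n with rfl | hx
  · exact hMx.symm ▸ hL.conv_eq n' x ▸ (h.triangle_left hL hf.isHom hpq n').flip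
  rcases eq_or_ne y n with rfl | hy
  · exact hMy.symm ▸ hL.conv_eq n' y ▸ (h.triangle_right hL hpq n').flip
  exact triangle_of_ne hL hf hpq hn hx hy hx' hy'

theorem eq_or_eq_of_newLabel (hL : AtomicNetwork G H L) (hpq : ¬ (p = yellow ∧ ∃ i, q = green i))
    (hM : newLabel L f x y p q n = yellow ∨ ∃ i, newLabel L f x y p q n = green i) :
    n = x ∨ n = y := by
  by_contra! hn
  rcases newLabel_cases (f := f) hL hpq hn.1.symm hn.2.symm with
    ⟨_, _, _, _, _, _, hM'⟩ | ⟨hM', _⟩ | ⟨hM', _⟩ <;> simp [hM'] at hM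

theorem eq_and_eq_of_newLabel (h : IsDefect G H L x y p q) (hL : AtomicNetwork G H L)
    (hpq : ¬ (p = yellow ∧ ∃ i, q = green i)) {u v : X} {i : G.V}
    (hu : newLabel L f x y p q u = green i) (hv : newLabel L f x y p q v = yellow) :
    u = x ∧ v = y := by
  have hMx : newLabel L f x y p q x = p := newLabel_left hL
  have hMy : newLabel L f x y p q y = q := h.newLabel_right hL
  rcases eq_or_eq_of_newLabel hL hpq (.inr ⟨i, hu⟩) with rfl | rfl <;>
    rcases eq_or_eq_of_newLabel hL hpq (.inl hv) with rfl | rfl <;> simp_all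

/-- The only cone that acquires the new node and may have any number of old nodes is the one over
`(x, y)`. -/
theorem exists_coneHom_some_some (h : IsDefect G H L x y p q) (hL : RainbowNetwork G H L)
    (hf : ConeHom G H L x y f) (hpq : ¬ (p = yellow ∧ ∃ i, q = green i)) (u v : X) :
    ∃ g, ConeHom G H (extendLabel L (newLabel L f x y p q)) (some u) (some v) g := by
  have hLa := hL.toAtomicNetwork
  by_cases huv : ∃ i, newLabel L f x y p q u = green i ∧ newLabel L f x y p q v = yellow
  · obtain ⟨i, hu, hv⟩ := huv
    obtain ⟨rfl, rfl⟩ := h.eq_and_eq_of_newLabel hLa hpq hu hv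
    obtain rfl : p = green i := (newLabel_left hLa).symm.trans hu
    obtain rfl : q = yellow := (h.newLabel_right hLa).symm.trans hv
    have hnew {n : X} {i' : G.V} (hun : L u n = green i') (hvn : L v n = yellow) :
        newLabel L f u v (green i) yellow n = red (f i) (f i') := by
      simp [newLabel, hun, hvn]
    refine ⟨f, hf.isHom, fun {n n' k k'} hn hun hvn hun' hvn' => ?_⟩
    match n, n' with
    | some n, some n' => exact hf.eq_red (mt (congrArg some) hn) hun hvn hun' hvn'
    | none, some n' =>
      obtain rfl : i = k := by simpa [extendLabel, hu] using hun
      exact hnew hun' hvn'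
    | some n, none =>
      obtain rfl : i = k' := by simpa [extendLabel, hu] using hun'
      simp [extendLabel, hnew hun hvn, conv]
    | none, none => exact absurd rfl hn
  · have hnone {i : G.V} (hu : (newLabel L f x y p q u).conv = green i)
        (hv : (newLabel L f x y p q v).conv = yellow) : False :=
      huv ⟨i, conv_eq_green.1 hu, conv_eq_yellow.1 hv⟩
    obtain ⟨g, hg⟩ := hL.exists_coneHom u v
    refine ⟨g, hg.isHom, fun {n n' k k'} hn hun hvn hun' hvn' => ?_⟩
    match n, n' with
    | some n, some n' => exact hg.eq_red (mt (congrArg some) hn) hun hvn hun' hvn'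
    | none, _ => exact (hnone hun hvn).elim
    | some _, none => exact (hnone hun' hvn').elim

theorem exists_rainbowNetwork_option (hGH : TwoPointExtension G H) (hL : RainbowNetwork G H L)
    (h : IsDefect G H L x y p q) :
    ∃ M, RainbowNetwork G H (extendLabel L M) ∧ M x = p ∧ M y = q := by
  have hLa := hL.toAtomicNetwork
  wlog hpq : ¬ (p = yellow ∧ ∃ i, q = green i) generalizing x y p q
  · obtain ⟨rfl, i, rfl⟩ := not_not.1 hpq
    exact (this (h.swap hLa) (by simp)).imp fun _ hM => ⟨hM.1, hM.2.2, hM.2.1⟩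
  obtain ⟨f, hf⟩ := hL.exists_coneHom x y
  have hM := hLa.option (h.newLabel_ne_id hLa hpq) (h.triangle_newLabel hLa hf hpq)
  refine ⟨newLabel L f x y p q, ⟨hM, fun u v => ?_⟩, newLabel_left hLa, h.newLabel_right hLa⟩
  match u, v with
  | some u, some v => exact h.exists_coneHom_some_some hL hf hpq u v
  | none, _ =>
    refine hM.exists_coneHom_of_forall_mem_pair hGH (x := some x) (y := some y)
      fun n i hn _ => ?_
    match n with
    | some n => exact (eq_or_eq_of_newLabel hLa hpq (.inr ⟨i, hn⟩)).imp (congrArg _) (congrArg _)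
  | some _, none =>
    refine hM.exists_coneHom_of_forall_mem_pair hGH (x := some x) (y := some y)
      fun n i _ hn => ?_
    match n with
    | some n => exact (eq_or_eq_of_newLabel hLa hpq (.inl hn)).imp (congrArg _) (congrArg _)

end IsDefect

end Networks

/-! ### Limits of finite networks -/

/-- A rainbow network on a finite set of natural numbers. The values of `label` off `nodes` are
irrelevant. -/
structure FiniteNetwork (G H : BinStruct σ) where
  nodes : Finset ℕ
  label : ℕ → ℕ → RbAtom G.V H.V
  isRainbow : RainbowNetwork G H fun x y : nodes => label x y

section FiniteNetworks

variable {G H : BinStruct σ}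

namespace FiniteNetwork

instance : Preorder (FiniteNetwork G H) where
  le N N' := N.nodes ⊆ N'.nodes ∧ ∀ x ∈ N.nodes, ∀ y ∈ N.nodes, N'.label x y = N.label x y
  le_refl _ := ⟨subset_rfl, fun _ _ _ _ => rfl⟩
  le_trans _ _ _ h h' := ⟨h.1.trans h'.1, fun x hx y hy =>
    (h'.2 x (h.1 hx) y (h.1 hy)).trans (h.2 x hx y hy)⟩

/-- `N` demands a node with label `a` from `x` and `b` to `y`. -/
def Demands (N : FiniteNetwork G H) (x y : ℕ) (a b : RbAtom G.V H.V) : Prop :=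
  x ∈ N.nodes ∧ y ∈ N.nodes ∧ ConsistentTriple G H a b (N.label x y)

/-- `N` has a node with label `a` from `x` and `b` to `y`. -/
def Supplies (N : FiniteNetwork G H) (x y : ℕ) (a b : RbAtom G.V H.V) : Prop :=
  x ∈ N.nodes ∧ y ∈ N.nodes ∧ ∃ z ∈ N.nodes, N.label x z = a ∧ N.label z y = b

theorem exists_ge_of_rainbowNetwork_option (N : FiniteNetwork G H)
    {M : N.nodes → RbAtom G.V H.V}
    (hM : RainbowNetwork G H (extendLabel (fun x y : N.nodes => N.label x y) M)) :
    ∃ N' ≥ N, ∃ z ∈ N'.nodes, ∀ x : N.nodes, N'.label z x = M x := by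
  obtain ⟨z, hz⟩ := Infinite.exists_notMem_finset N.nodes
  let e (x : ℕ) : Option N.nodes := if h : x ∈ N.nodes then some ⟨x, h⟩ else none
  have e_old {x : ℕ} (hx : x ∈ N.nodes) : e x = some ⟨x, hx⟩ := dif_pos hx
  have e_new : e z = none := dif_neg hz
  have e_injective : Function.Injective fun x : (insert z N.nodes : Finset ℕ) => e x := by
    rintro ⟨x, hx⟩ ⟨y, hy⟩ (hxy : e x = e y)
    rcases Finset.mem_insert.1 hx with rfl | hx' <;> rcases Finset.mem_insert.1 hy with rfl | hy'
    · rfl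
    · simp [e_new, e_old hy'] at hxy
    · simp [e_new, e_old hx'] at hxy
    · simpa [e_old hx', e_old hy'] using hxy
  refine ⟨⟨insert z N.nodes, fun x y => extendLabel _ M (e x) (e y), hM.comap e_injective⟩,
    ⟨Finset.subset_insert _ _, fun x hx y hy => ?_⟩, z, Finset.mem_insert_self _ _, fun x => ?_⟩
  · simp only [e_old hx, e_old hy, extendLabel]
  · simp only [e_new, e_old x.2, extendLabel]

theorem Demands.exists_supplies (hGH : TwoPointExtension G H) {N : FiniteNetwork G H} {x y : ℕ}
    {a b : RbAtom G.V H.V} (h : N.Demands x y a b) : ∃ N' ≥ N, N'.Supplies x y a b := by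
  obtain ⟨hx, hy, htri⟩ := h
  by_cases hN : ∃ z ∈ N.nodes, N.label x z = a ∧ N.label z y = b
  · exact ⟨N, le_rfl, hx, hy, hN⟩
  have hdefect : IsDefect G H (fun x y : N.nodes => N.label x y) ⟨x, hx⟩ ⟨y, hy⟩ a.conv b := by
    refine ⟨htri.rotate, fun z hz => hN ⟨z, z.2, ?_, hz.2⟩⟩
    rw [← conv_inj, ← hz.1]
    exact (N.isRainbow.conv_eq ⟨x, hx⟩ z).symm
  obtain ⟨M, hM, hMx, hMy⟩ := hdefect.exists_rainbowNetwork_option hGH N.isRainbow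
  obtain ⟨N', hN', z, hz, hzM⟩ := N.exists_ge_of_rainbowNetwork_option hM
  have hzx : N'.label z x = a.conv := (hzM ⟨x, hx⟩).trans hMx
  refine ⟨N', hN', hN'.1 hx, hN'.1 hy, z, hz, ?_, (hzM ⟨y, hy⟩).trans hMy⟩
  simpa only [hzx, conv_conv] using N'.isRainbow.conv_eq ⟨z, hz⟩ ⟨x, hN'.1 hx⟩

/-- The networks that supply what any of their extensions demands for `x`, `y`, `a`, `b`. -/
def settled (hGH : TwoPointExtension G H) (d : ℕ × ℕ × RbAtom G.V H.V × RbAtom G.V H.V) :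
    Order.Cofinal (FiniteNetwork G H) where
  carrier := {N | ∀ N' ≥ N, N'.Demands d.1 d.2.1 d.2.2.1 d.2.2.2 →
    N.Supplies d.1 d.2.1 d.2.2.1 d.2.2.2}
  isCofinal N := by
    by_cases h : ∃ N' ≥ N, N'.Demands d.1 d.2.1 d.2.2.1 d.2.2.2
    · obtain ⟨N', hN', hd⟩ := h
      obtain ⟨N'', hN'', hs⟩ := hd.exists_supplies hGH
      exact ⟨N'', fun _ _ _ => hs, hN'.trans hN''⟩
    · exact ⟨N, fun N' hN' hd => (h ⟨N', hN', hd⟩).elim, le_rfl⟩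

theorem exists_limit (I : Order.Ideal (FiniteNetwork G H)) :
    ∃ L : {n // ∃ N ∈ I, n ∈ N.nodes} → {n // ∃ N ∈ I, n ∈ N.nodes} → RbAtom G.V H.V,
      AtomicNetwork G H L ∧
      ∀ N ∈ I, ∀ x y, ↑x ∈ N.nodes → ↑y ∈ N.nodes → L x y = N.label x y := by
  have directed {N N' : FiniteNetwork G H} (hN : N ∈ I) (hN' : N' ∈ I) :
      ∃ K ∈ I, N ≤ K ∧ N' ≤ K := I.directed N hN N' hN'
  have common (x y : {n // ∃ N ∈ I, n ∈ N.nodes}) : ∃ N ∈ I, ↑x ∈ N.nodes ∧ ↑y ∈ N.nodes := by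
    obtain ⟨x, N, hN, hx⟩ := x
    obtain ⟨y, N', hN', hy⟩ := y
    obtain ⟨K, hK, hNK, hNK'⟩ := directed hN hN'
    exact ⟨K, hK, hNK.1 hx, hNK'.1 hy⟩
  choose N hNI hNx hNy using common
  have label_eq (K) (hK : K ∈ I) (x y : {n // ∃ N ∈ I, n ∈ N.nodes}) (hx : ↑x ∈ K.nodes)
      (hy : ↑y ∈ K.nodes) : (N x y).label x y = K.label x y := by
    obtain ⟨J, -, hKJ, hNJ⟩ := directed hK (hNI x y)
    rw [← hNJ.2 x (hNx x y) y (hNy x y), hKJ.2 x hx y hy]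
  refine ⟨fun x y => (N x y).label x y, ⟨fun x y => ?_, fun x y => ?_, fun x y z => ?_⟩, label_eq⟩
  · rw [(N x y).isRainbow.eq_id_iff ⟨x, hNx x y⟩ ⟨y, hNy x y⟩, Subtype.mk.injEq, Subtype.ext_iff]
  · rw [label_eq _ (hNI x y) y x (hNy x y) (hNx x y)]
    exact (N x y).isRainbow.conv_eq ⟨x, hNx x y⟩ ⟨y, hNy x y⟩
  · obtain ⟨K, hK, hxyK, hyzK⟩ := directed (hNI x y) (hNI y z)
    have hx := hxyK.1 (hNx x y)
    have hy := hxyK.1 (hNy x y)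
    have hz := hyzK.1 (hNy y z)
    rw [label_eq K hK x y hx hy, label_eq K hK y z hy hz, label_eq K hK x z hx hz]
    exact K.isRainbow.triangle ⟨x, hx⟩ ⟨y, hy⟩ ⟨z, hz⟩

end FiniteNetwork

theorem exists_saturated_atomicNetwork [Countable G.V] [Countable H.V]
    (hGH : TwoPointExtension G H) :
    ∃ (X : Type) (_ : Nonempty X) (L : X → X → RbAtom G.V H.V), AtomicNetwork G H L ∧
      ∀ x y a b, ConsistentTriple G H a b (L x y) → ∃ z, L x z = a ∧ L z y = b := by
  have : Encodable (ℕ × ℕ × RbAtom G.V H.V × RbAtom G.V H.V) := Encodable.ofCountable _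
  let N₀ : FiniteNetwork G H := ⟨{0}, fun _ _ => .id, rainbowNetwork_const_id hGH⟩
  let I := Order.idealOfCofinals N₀ (FiniteNetwork.settled hGH)
  obtain ⟨L, hL, label_eq⟩ := FiniteNetwork.exists_limit I
  refine ⟨_, ⟨0, N₀, Order.mem_idealOfCofinals _ _, Finset.mem_singleton_self 0⟩, L, hL,
    fun x y a b h => ?_⟩
  obtain ⟨N, hsettled, hNI⟩ :=
    Order.cofinal_meets_idealOfCofinals N₀ (FiniteNetwork.settled hGH) (x, y, a, b)
  obtain ⟨N₁, hN₁, hx⟩ := x.2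
  obtain ⟨N₂, hN₂, hy⟩ := y.2
  obtain ⟨K, hK, hN₁K, hN₂K⟩ := I.directed N₁ hN₁ N₂ hN₂
  obtain ⟨J, hJ, hNJ, hKJ⟩ := I.directed N hNI K hK
  have hxJ := hKJ.1 (hN₁K.1 hx)
  have hyJ := hKJ.1 (hN₂K.1 hy)
  obtain ⟨hxN, hyN, z, hz, hxz, hzy⟩ :=
    hsettled J hNJ ⟨hxJ, hyJ, label_eq J hJ x y hxJ hyJ ▸ h⟩
  exact ⟨⟨z, N, hNI, hz⟩, (label_eq N hNI x ⟨z, N, hNI, hz⟩ hxN hz).trans hxz,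
    (label_eq N hNI ⟨z, N, hNI, hz⟩ y hz hyN).trans hzy⟩

theorem AtomicNetwork.isRepresentation [PairHom G H] {X : Type} [Nonempty X]
    {L : X → X → RbAtom G.V H.V} (hL : AtomicNetwork G H L)
    (hsat : ∀ x y a b, ConsistentTriple G H a b (L x y) → ∃ z, L x z = a ∧ L z y = b) :
    IsRepresentation fun A : Set (RbAtom G.V H.V) => {p : X × X | L p.1 p.2 ∈ A} where
  injective A B hAB := by
    ext a
    obtain ⟨x⟩ := ‹Nonempty X›
    obtain ⟨z, rfl, -⟩ := hsat x x a a.conv (by simp [hL.self])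
    exact Set.ext_iff.1 hAB (x, z)
  map_sup _ _ := rfl
  map_compl _ := by
    ext
    exact (and_iff_right trivial).symm
  map_comp A B := by
    ext ⟨x, y⟩
    refine (mem_rbComp (G := G) (H := H)).trans ⟨?_, ?_⟩
    · rintro ⟨a, ha, b, hb, h⟩
      obtain ⟨z, rfl, rfl⟩ := hsat x y a b h
      exact ⟨z, ha, hb⟩
    · rintro ⟨z, ha, hb⟩
      exact ⟨_, ha, _, hb, hL.triangle x z y⟩
  map_conv A := by
    ext ⟨x, y⟩
    exact iff_of_eq (congrArg (· ∈ A) (hL.conv_eq x y).symm)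
  map_one' := by
    ext ⟨x, y⟩
    exact hL.eq_id_iff x y

theorem representable_rbRA [PairHom G H] [Countable G.V] [Countable H.V]
    (hGH : TwoPointExtension G H) : Representable (Set (RbAtom G.V H.V)) := by
  obtain ⟨X, _, L, hL, hsat⟩ := exists_saturated_atomicNetwork hGH
  exact representable_iff.2 ⟨X, _, hL.isRepresentation hsat⟩

end FiniteNetworks

/-! ### Separating `B_{H,H}` from `B_{G,H}` -/

theorem rra_not_c_variable_axiomatisable_general {σ : Type} (G H : BinStruct σ) [Finite H.V]
    (c n : ℕ) (hn : c + 2 ≤ n) (h1 : ExSurvives G H n (fun _ => ∅) (fun _ => ∅))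
    (h2 : ∀ (i i' j j' : H.V), i ≠ i' → PartialHom2 H H i i' j j' →
        ∃ f : H.V → H.V, IsHom H H f ∧ f i = j ∧ f i' = j')
    (h3 : ∃ (i i' : G.V) (j j' : H.V), i ≠ i' ∧ PartialHom2 G H i i' j j' ∧
        ¬ ∃ f : G.V → H.V, IsHom G H f ∧ f i = j ∧ f i' = j') :
    ¬ ∃ T : Set (RAFormula c), ∀ (A : Type) [RelationAlgebra A],
      (Representable A ↔ ∀ φ ∈ T, RAFormula.Sat (RAOps.ofClass A) (fun _ => ⊥) φ) := by
  rintro ⟨T, hT⟩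
  obtain ⟨Inv, hInv⟩ : ∃ Inv, IsColInvariant G H n Inv := h1
  let ι : Fin c ↪ Fin n := Fin.castLEEmb (by omega)
  have hι : (Set.range ι)ᶜ.Nontrivial :=
    ⟨⟨c, by omega⟩, by simp [ι], ⟨c + 1, by omega⟩, by simp [ι], by simp⟩
  have : PairHom G H := (hInv.isBackAndForth_tagSystem hι hInv.1).pairHom
  have hH : Representable (Set (RbAtom H.V H.V)) :=
    representable_rbRA ⟨⟨_, fun _ _ _ _ h => h⟩, h2⟩
  refine not_representable_rbRA h3 ((hT _).2 fun φ hφ => ?_)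
  exact (hInv.sat_iff (F := H) hι φ).2 ((hT _).1 hH φ hφ)

theorem rra_not_c_variable_axiomatisable {σ : Type} (G H : BinStruct σ)
    [Finite G.V] [Finite H.V] (c : ℕ)
    (h1 : ExSurvives G H (c + 3) (fun _ => ∅) (fun _ => ∅))
    (h2 : ∀ (i i' j j' : H.V), i ≠ i' → PartialHom2 H H i i' j j' →
        ∃ f : H.V → H.V, IsHom H H f ∧ f i = j ∧ f i' = j')
    (h3 : ∃ (i i' : G.V) (j j' : H.V), i ≠ i' ∧ PartialHom2 G H i i' j j' ∧
        ¬ ∃ f : G.V → H.V, IsHom G H f ∧ f i = j ∧ f i' = j') :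
    ¬ ∃ T : Set (RAFormula c), (∀ φ ∈ T, φ.freeVars = ∅) ∧
        ∀ (A : Type) [RelationAlgebra A],
          (Representable A ↔ ∀ φ ∈ T, RAFormula.Sat (RAOps.ofClass A) (fun _ => ⊥) φ) := by
  rintro ⟨T, -, hT⟩
  exact rra_not_c_variable_axiomatisable_general G H c (c + 3) (by omega) h1 h2 h3 ⟨T, hT⟩
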